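/- Under Assumptions 1, 2, 4, and 5, gradient descent on the empirical risk of a deep linear network on linearly separable data satisfies: (i) lim_{t→∞} R(W(t)) = 0; (ii) for every 1 ≤ k ≤ L, lim_{t→∞} ‖W_k(t)‖_F = ∞; and (iii) lim_{t→∞} |⟨ w_prod(t) / ∏_{k=1}^L ‖W_k(t)‖_F , v_1(t) ⟩| = 1, for any choice of top singular vector pair (u_1(t), v_1(t)) of W_1(t). -/

import Mathlib

/-!
Write `p_j = (W_{L-1} ⋯ W_j)ᵀ` for the backpropagated vector (`backVec`), so that
`W_jᵀ p_{j+1} = p_j` and `w_prod = p_0`, and `h_k = W_{k-1} ⋯ W_0 ∇R(w_prod)` for the forward image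
of the gradient of the linear risk (`fwdVec`). The gradient with respect to layer `k` is the
rank-one matrix `p_{k+1} h_kᵀ` (`gradLayer_eq`).

*Descent.* The change of the product `w_prod` in one step is its linearization in the step plus a
remainder that is quadratic in the step (`backVec_perturb`). The inner product of the linearization
with `∇R(w_prod)` is `-η ‖∇R(W)‖²`, and the step size makes the quadratic terms at most half of
that (`step_descent`). Hence `∑ η_t ‖∇R(W(t))‖² ≤ 2 R(W(0))`.

*Alignment.* As `W_{k+1}ᵀ ∇_{k+1} = ∇_k W_kᵀ`, one step changes the imbalance
`W_{k+1}ᵀ W_{k+1} - W_k W_kᵀ` only by `O(η² ‖∇‖²)` (`imbalance_step`), so all imbalances stay bounded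
along the trajectory. With `a = ‖W_{L-1}‖_F²`, a bounded imbalance gives a constant `C` with
`|‖W_k‖_F² - a| ≤ C`, by taking traces, and `‖p_k‖² ≥ (a - C) ‖p_{k+1}‖²`, by Cauchy-Schwarz
(`backVec_growth`, `aligned_of_imbalance`). The second inequality for `k = 0` also forces
`‖W_0‖₂² ≥ a - C`, so `W_0` is close to rank one relative to its size and
`⟨w_prod, v_1⟩² ≥ (a - 3C)^L` (`Aligned.component_lower`), while `∏ ‖W_k‖_F² ≤ (a + C)^L`.

*Risk.* The first step strictly lowers the risk below `ℓ(0)`, which keeps `w_prod`, hence `p_1`, away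
from zero. If the risk stayed above some `ε > 0`, then `∇R(w_prod)` would be bounded below by
separability (`gradRiskV_lower`), hence so would `∇_0 = p_1 ∇R(w_prod)ᵀ`. Summability of
`η_t ‖∇R‖²` would then bound the path length, hence the weights, hence the radii `R_t`, and the step
sizes would be bounded below, making the sum infinite (`no_stall`).

Risk tending to zero forces `‖w_prod‖`, thus `a`, to infinity. All layer norms then diverge, and the
ratio in the last claim is squeezed between `((a - 3C) / (a + C))^L` and `1`.
-/

open Matrix Filter
open scoped BigOperators

noncomputable section

/-- Euclidean norm of a vector in `ℝ^m`. -/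
def vecNorm {m : Type*} [Fintype m] (v : m → ℝ) : ℝ :=
  Real.sqrt (∑ i, (v i) ^ 2)

/-- Frobenius norm of a real matrix. -/
def frobNorm {m n : Type*} [Fintype m] [Fintype n] (M : Matrix m n ℝ) : ℝ :=
  Real.sqrt (∑ i, ∑ j, (M i j) ^ 2)

/-- Spectral norm (operator 2-norm) of a real matrix. -/
def specNorm {m n : Type*} [Fintype m] [Fintype n] (M : Matrix m n ℝ) : ℝ :=
  sSup {c : ℝ | ∃ v : n → ℝ, vecNorm v = 1 ∧ c = vecNorm (M.mulVec v)}

/-- `(u, v)` is a top singular vector pair of `M`: both are unit vectors,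
`M v = ‖M‖₂ u` and `Mᵀ u = ‖M‖₂ v`. -/
def IsTopSingularPair {m n : Type*} [Fintype m] [Fintype n]
    (M : Matrix m n ℝ) (u : m → ℝ) (v : n → ℝ) : Prop :=
  vecNorm u = 1 ∧ vecNorm v = 1 ∧
    M.mulVec v = specNorm M • u ∧ Mᵀ.mulVec u = specNorm M • v

/-- Parameters of a deep linear network: layer `k` (0-indexed; paper layer `k+1`)
is a matrix mapping `ℝ^{dim k}` to `ℝ^{dim (k+1)}`. -/
abbrev Layers (dim : ℕ → ℕ) := ∀ j : ℕ, Matrix (Fin (dim (j+1))) (Fin (dim j)) ℝ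

/-- Product `W_{j-1} ⋯ W_0` of the bottom `j` layers (paper: `W_j ⋯ W_1`). -/
def prodUpTo {dim : ℕ → ℕ} (W : Layers dim) : ∀ j : ℕ, Matrix (Fin (dim j)) (Fin (dim 0)) ℝ
  | 0 => 1
  | (j+1) => W j * prodUpTo W j

/-- Product `W_{L-1} ⋯ W_j` of the layers from `j` up to the top layer `L-1`
(paper: `W_L ⋯ W_{j+1}`); for `j ≥ L` it is a pseudo-identity. -/
def prodFrom {dim : ℕ → ℕ} (L : ℕ) (W : Layers dim) (j : ℕ) :
    Matrix (Fin (dim L)) (Fin (dim j)) ℝ :=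
  if h : j < L then prodFrom L W (j+1) * W j
  else Matrix.of fun i j' => if (i : ℕ) = (j' : ℕ) then 1 else 0
  termination_by L - j
  decreasing_by omega

/-- The linear predictor `w_prod = (W_L ⋯ W_1)ᵀ ∈ ℝ^d` induced by the network
(recall `dim L = 1`). -/
def wprod {dim : ℕ → ℕ} (L : ℕ) (W : Layers dim) : Fin (dim 0) → ℝ :=
  fun j => ∑ a, prodUpTo W L a j

/-- Empirical risk of a linear predictor `w`: `R(w) = (1/n) ∑ᵢ ℓ(⟨w, zᵢ⟩)`. -/
def riskV {n d : ℕ} (ℓ : ℝ → ℝ) (z : Fin n → Fin d → ℝ) (w : Fin d → ℝ) : ℝ :=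
  (n : ℝ)⁻¹ * ∑ i, ℓ (w ⬝ᵥ z i)

/-- Gradient of the risk w.r.t. the linear predictor: `∇R(w) = (1/n) ∑ᵢ ℓ'(⟨w, zᵢ⟩) zᵢ`. -/
def gradRiskV {n d : ℕ} (ℓ' : ℝ → ℝ) (z : Fin n → Fin d → ℝ) (w : Fin d → ℝ) :
    Fin d → ℝ :=
  (n : ℝ)⁻¹ • ∑ i, ℓ' (w ⬝ᵥ z i) • z i

/-- The partial gradient of the empirical risk with respect to layer `k`:
`∂R/∂W_k = (W_L ⋯ W_{k+1})ᵀ ∇R(w_prod)ᵀ (W_{k-1} ⋯ W_1)ᵀ`. -/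
def gradLayer {dim : ℕ → ℕ} (L : ℕ) (ℓ' : ℝ → ℝ) {n : ℕ}
    (z : Fin n → Fin (dim 0) → ℝ) (W : Layers dim) (k : ℕ) :
    Matrix (Fin (dim (k+1))) (Fin (dim k)) ℝ :=
  (prodFrom L W (k+1))ᵀ *
    (Matrix.of fun (_ : Fin (dim L)) (j : Fin (dim 0)) => gradRiskV ℓ' z (wprod L W) j) *
    (prodUpTo W k)ᵀ

/-- Empirical risk of the network. -/
def riskW {dim : ℕ → ℕ} (L : ℕ) (ℓ : ℝ → ℝ) {n : ℕ}
    (z : Fin n → Fin (dim 0) → ℝ) (W : Layers dim) : ℝ :=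
  riskV ℓ z (wprod L W)

/-- Gradient flow: `dW(t)/dt = −∇R(W(t))` for all `t ≥ 0`, entrywise on each layer. -/
def IsGradientFlow {dim : ℕ → ℕ} (L : ℕ) (ℓ' : ℝ → ℝ) {n : ℕ}
    (z : Fin n → Fin (dim 0) → ℝ) (W : ℝ → Layers dim) : Prop :=
  ∀ t : ℝ, 0 ≤ t → ∀ k < L, ∀ i j,
    HasDerivAt (fun s => W s k i j) (-(gradLayer L ℓ' z (W t) k i j)) t

/-- The initialization-dependent constant `D`. -/
def Dconst {dim : ℕ → ℕ} (L : ℕ) (W0 : Layers dim) : ℝ :=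
  (⨆ k : Fin L, frobNorm (W0 k) ^ 2) - frobNorm (W0 (L-1)) ^ 2
    + ∑ k ∈ Finset.range (L-1),
        specNorm (W0 k * (W0 k)ᵀ - (W0 (k+1))ᵀ * W0 (k+1))

/-- Euclidean norm of a parameter tuple (all entries of the first `L` layers concatenated). -/
def paramNorm {dim : ℕ → ℕ} (L : ℕ) (V : Layers dim) : ℝ :=
  Real.sqrt (∑ k ∈ Finset.range L, frobNorm (V k) ^ 2)

/-- Squared Euclidean norm of the full gradient `∇R(W)`. -/
def gradNormSq {dim : ℕ → ℕ} (L : ℕ) (ℓ' : ℝ → ℝ) {n : ℕ}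
    (z : Fin n → Fin (dim 0) → ℝ) (W : Layers dim) : ℝ :=
  ∑ k ∈ Finset.range L, frobNorm (gradLayer L ℓ' z W k) ^ 2

/-- The data-dependent constant `α = min_{‖ξ‖=1, ξ ⟂ ū} max_{i ∈ S} ⟨ξ, zᵢ⟩`,
where `S` is the set of support vectors. -/
def alphaConst {n d : ℕ} (z : Fin n → Fin d → ℝ) (ubar : Fin d → ℝ) (γ : ℝ) : ℝ :=
  sInf {c : ℝ | ∃ ξ : Fin d → ℝ, vecNorm ξ = 1 ∧ ξ ⬝ᵥ ubar = 0 ∧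
    c = sSup {r : ℝ | ∃ i : Fin n, ubar ⬝ᵥ z i = γ ∧ r = ξ ⬝ᵥ z i}}

/-- Orthogonal projection onto the orthogonal complement of `span(ū)` (for `ū` a unit vector). -/
def projPerp {d : ℕ} (ubar : Fin d → ℝ) (w : Fin d → ℝ) : Fin d → ℝ :=
  w - (w ⬝ᵥ ubar) • ubar

/-! ### Euclidean and Frobenius norms -/

lemma vecNorm_eq {m : Type*} [Fintype m] (v : m → ℝ) : vecNorm v = ‖WithLp.toLp 2 v‖ := by
  simp [vecNorm, EuclideanSpace.norm_eq]

lemma vecNorm_nonneg {m : Type*} [Fintype m] (v : m → ℝ) : 0 ≤ vecNorm v := Real.sqrt_nonneg _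

lemma vecNorm_sq {m : Type*} [Fintype m] (v : m → ℝ) : vecNorm v ^ 2 = v ⬝ᵥ v := by
  rw [vecNorm, Real.sq_sqrt (Finset.sum_nonneg fun i _ => sq_nonneg _)]
  simp [dotProduct, sq]

lemma vecNorm_add_le {m : Type*} [Fintype m] (v w : m → ℝ) :
    vecNorm (v + w) ≤ vecNorm v + vecNorm w := by
  simpa [vecNorm_eq] using norm_add_le (WithLp.toLp 2 v) (WithLp.toLp 2 w)

lemma vecNorm_smul {m : Type*} [Fintype m] (c : ℝ) (v : m → ℝ) :
    vecNorm (c • v) = |c| * vecNorm v := by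
  simpa [vecNorm_eq] using norm_smul c (WithLp.toLp 2 v)

lemma dot_sq_le {m : Type*} [Fintype m] (v w : m → ℝ) :
    (v ⬝ᵥ w) ^ 2 ≤ (v ⬝ᵥ v) * (w ⬝ᵥ w) := by
  have := Finset.sum_mul_sq_le_sq_mul_sq Finset.univ v w
  simpa [dotProduct, sq] using this

lemma abs_dot_le {m : Type*} [Fintype m] (v w : m → ℝ) :
    |v ⬝ᵥ w| ≤ vecNorm v * vecNorm w := by
  apply abs_le_of_sq_le_sq _ (mul_nonneg (vecNorm_nonneg _) (vecNorm_nonneg _))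
  rw [mul_pow, vecNorm_sq, vecNorm_sq]
  exact dot_sq_le v w

lemma vecNorm_sum_le {m ι : Type*} [Fintype m] (s : Finset ι) (f : ι → m → ℝ) :
    vecNorm (∑ i ∈ s, f i) ≤ ∑ i ∈ s, vecNorm (f i) := by
  classical
  induction s using Finset.induction_on with
  | empty => simp [vecNorm]
  | insert a s ha ih =>
    rw [Finset.sum_insert ha, Finset.sum_insert ha]
    exact (vecNorm_add_le _ _).trans (by linarith)

section Frob
open scoped Matrix.Norms.Frobenius

lemma frobNorm_eq {m n : Type*} [Fintype m] [Fintype n] (M : Matrix m n ℝ) :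
    frobNorm M = ‖M‖ := by
  rw [frobNorm, Matrix.frobenius_norm_def, Real.sqrt_eq_rpow]
  simp

lemma frobNorm_nonneg {m n : Type*} [Fintype m] [Fintype n] (M : Matrix m n ℝ) :
    0 ≤ frobNorm M := Real.sqrt_nonneg _

lemma frobNorm_add_le {m n : Type*} [Fintype m] [Fintype n] (M N : Matrix m n ℝ) :
    frobNorm (M + N) ≤ frobNorm M + frobNorm N := by
  simpa [frobNorm_eq] using norm_add_le M N

lemma frobNorm_sub_le {m n : Type*} [Fintype m] [Fintype n] (M N : Matrix m n ℝ) :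
    frobNorm (M - N) ≤ frobNorm M + frobNorm N := by
  simpa [frobNorm_eq] using norm_sub_le M N

lemma frobNorm_smul {m n : Type*} [Fintype m] [Fintype n] (c : ℝ) (M : Matrix m n ℝ) :
    frobNorm (c • M) = |c| * frobNorm M := by
  simpa [frobNorm_eq] using norm_smul c M

lemma frobNorm_mul_le {l m n : Type*} [Fintype l] [Fintype m] [Fintype n] (M : Matrix l m ℝ)
    (N : Matrix m n ℝ) : frobNorm (M * N) ≤ frobNorm M * frobNorm N := by
  simpa [frobNorm_eq] using Matrix.frobenius_norm_mul M N

lemma frobNorm_transpose {m n : Type*} [Fintype m] [Fintype n] (M : Matrix m n ℝ) :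
    frobNorm Mᵀ = frobNorm M := by
  simp only [frobNorm, Matrix.transpose_apply]
  rw [Finset.sum_comm]

end Frob

lemma frobNorm_sq {m n : Type*} [Fintype m] [Fintype n] (M : Matrix m n ℝ) :
    frobNorm M ^ 2 = ∑ i, ∑ j, M i j ^ 2 := by
  unfold frobNorm
  exact Real.sq_sqrt (Finset.sum_nonneg fun i _ => Finset.sum_nonneg fun j _ => sq_nonneg _)

lemma frobNorm_sq_trace {m n : Type*} [Fintype m] [Fintype n] (M : Matrix m n ℝ) :
    frobNorm M ^ 2 = (M * Mᵀ).trace := by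
  rw [frobNorm_sq]
  simp [Matrix.trace, Matrix.mul_apply, sq]

lemma vecNorm_mulVec_le {m n : Type*} [Fintype m] [Fintype n] (M : Matrix m n ℝ) (v : n → ℝ) :
    vecNorm (M *ᵥ v) ≤ frobNorm M * vecNorm v := by
  have h := frobNorm_mul_le M (Matrix.replicateCol Unit v)
  have e1 : frobNorm (M * Matrix.replicateCol Unit v) = vecNorm (M *ᵥ v) := by
    rw [← Matrix.replicateCol_mulVec]; simp [frobNorm, vecNorm]
  have e2 : frobNorm (Matrix.replicateCol Unit v) = vecNorm v := by simp [frobNorm, vecNorm]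
  rwa [e1, e2] at h

lemma frobNorm_vecMulVec {m n : Type*} [Fintype m] [Fintype n] (v : m → ℝ) (w : n → ℝ) :
    frobNorm (Matrix.vecMulVec v w) = vecNorm v * vecNorm w := by
  rw [frobNorm, vecNorm, vecNorm, ← Real.sqrt_mul (Finset.sum_nonneg fun i _ => sq_nonneg _),
    Finset.sum_mul_sum]
  simp [Matrix.vecMulVec_apply, mul_pow]

lemma abs_trace_le {m : Type*} [Fintype m] (M : Matrix m m ℝ) :
    |M.trace| ≤ Fintype.card m * frobNorm M := by
  have h : ∀ i, |M i i| ≤ frobNorm M := fun i => by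
    apply abs_le_of_sq_le_sq _ (frobNorm_nonneg M)
    rw [frobNorm_sq]
    calc M i i ^ 2 ≤ ∑ j, M i j ^ 2 :=
          Finset.single_le_sum (f := fun j => M i j ^ 2) (fun j _ => sq_nonneg _) (Finset.mem_univ i)
      _ ≤ _ := Finset.single_le_sum (f := fun i => ∑ j, M i j ^ 2)
          (fun j _ => Finset.sum_nonneg fun j _ => sq_nonneg _) (Finset.mem_univ i)
  calc |M.trace| ≤ ∑ i, |M i i| := Finset.abs_sum_le_sum_abs _ _
    _ ≤ ∑ _i : m, frobNorm M := Finset.sum_le_sum fun i _ => h i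
    _ = _ := by simp

/-! ### Rank-one structure of the layer gradients -/

/-- The backpropagated vector `p_j = (W_{L-1} ⋯ W_j)ᵀ`, written as a vector by summing over the
(single) output coordinate. -/
def backVec {dim : ℕ → ℕ} (L : ℕ) (W : Layers dim) (j : ℕ) : Fin (dim j) → ℝ :=
  fun i => ∑ a, prodFrom L W j a i

/-- The image `W_{k-1} ⋯ W_0 g` of an input vector `g` under the bottom `k` layers. -/
def fwdVec {dim : ℕ → ℕ} (W : Layers dim) (g : Fin (dim 0) → ℝ) (k : ℕ) : Fin (dim k) → ℝ :=
  prodUpTo W k *ᵥ g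

lemma fwdVec_zero {dim : ℕ → ℕ} (W : Layers dim) (g : Fin (dim 0) → ℝ) :
    fwdVec W g 0 = g := by simp [fwdVec, prodUpTo]

lemma fwdVec_succ {dim : ℕ → ℕ} (W : Layers dim) (g : Fin (dim 0) → ℝ) (k : ℕ) :
    fwdVec W g (k+1) = W k *ᵥ fwdVec W g k := by simp [fwdVec, prodUpTo]

lemma backVec_lt {dim : ℕ → ℕ} {L : ℕ} (W : Layers dim) {j : ℕ} (hj : j < L) :
    backVec L W j = (W j)ᵀ *ᵥ backVec L W (j+1) := by
  funext i
  simp only [Matrix.mulVec, dotProduct, backVec]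
  rw [show prodFrom L W j = prodFrom L W (j+1) * W j by rw [prodFrom, dif_pos hj]]
  simp only [Matrix.mul_apply, Matrix.transpose_apply, Finset.mul_sum]
  rw [Finset.sum_comm]
  simp only [mul_comm]

lemma backVec_top {dim : ℕ → ℕ} {L : ℕ} (hdimL : dim L = 1) (W : Layers dim) (i : Fin (dim L)) :
    backVec L W L i = 1 := by
  have : Subsingleton (Fin (dim L)) := by rw [hdimL]; infer_instance
  simp only [backVec]
  rw [Fintype.sum_subsingleton _ i, prodFrom]
  simp

lemma vecNorm_backVec_top {dim : ℕ → ℕ} {L : ℕ} (hdimL : dim L = 1) (W : Layers dim) :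
    vecNorm (backVec L W L) = 1 := by
  simp [vecNorm, backVec_top hdimL, hdimL]

/-- The predictor can be cut at any layer `j` into its upper and lower factors. -/
lemma wprod_eq_vecMul {dim : ℕ → ℕ} {L : ℕ} (hdimL : dim L = 1) (W : Layers dim) (j : ℕ)
    (hj : j ≤ L) : wprod L W = backVec L W j ᵥ* prodUpTo W j := by
  induction hj using Nat.decreasingInduction with
  | self =>
    funext i
    simp [wprod, Matrix.vecMul, dotProduct, backVec_top hdimL]
  | of_succ k hk ih =>
    rw [ih, backVec_lt W hk, prodUpTo, Matrix.mulVec_transpose, Matrix.vecMul_vecMul]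

lemma wprod_eq {dim : ℕ → ℕ} {L : ℕ} (hdimL : dim L = 1) (W : Layers dim) :
    wprod L W = backVec L W 0 := by
  rw [wprod_eq_vecMul hdimL W 0 (Nat.zero_le _)]
  simp [prodUpTo]

/-- The gradient with respect to layer `k` is the outer product of `p_{k+1}` with the forward image of
the gradient of the linear risk. -/
lemma gradLayer_eq {dim : ℕ → ℕ} (L : ℕ) (ℓ' : ℝ → ℝ) {n : ℕ}
    (z : Fin n → Fin (dim 0) → ℝ) (W : Layers dim) (k : ℕ) :
    gradLayer L ℓ' z W k =
      Matrix.vecMulVec (backVec L W (k+1)) (fwdVec W (gradRiskV ℓ' z (wprod L W)) k) := by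
  ext i j
  simp only [gradLayer, backVec, fwdVec, Matrix.vecMulVec_apply, Matrix.mul_apply, Matrix.mulVec,
    dotProduct, Matrix.transpose_apply, Matrix.of_apply, Finset.mul_sum, Finset.sum_mul]
  refine Finset.sum_congr rfl fun a _ => Finset.sum_congr rfl fun b _ => by ring

lemma vecNorm_fwdVec_le {dim : ℕ → ℕ} (L : ℕ) (W : Layers dim) (g : Fin (dim 0) → ℝ) {R : ℝ}
    (hW : ∀ k < L, frobNorm (W k) ≤ R) (k : ℕ) (hk : k ≤ L) :
    vecNorm (fwdVec W g k) ≤ R ^ k * vecNorm g := by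
  induction k with
  | zero => simp [fwdVec_zero]
  | succ k ih =>
    rw [fwdVec_succ]
    have h0 := (frobNorm_nonneg (W k)).trans (hW k hk)
    calc _ ≤ frobNorm (W k) * vecNorm (fwdVec W g k) := vecNorm_mulVec_le _ _
      _ ≤ R * (R ^ k * vecNorm g) :=
        mul_le_mul (hW k hk) (ih (by omega)) (vecNorm_nonneg _) h0
      _ = _ := by ring

lemma vecNorm_backVec_le {dim : ℕ → ℕ} {L : ℕ} (hdimL : dim L = 1) (W : Layers dim) {R : ℝ}
    (hW : ∀ k < L, frobNorm (W k) ≤ R) (j : ℕ) (hj : j ≤ L) :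
    vecNorm (backVec L W j) ≤ R ^ (L - j) := by
  induction hj using Nat.decreasingInduction with
  | self => simp [vecNorm_backVec_top hdimL]
  | of_succ k hk ih =>
    rw [backVec_lt W hk, show L - k = (L - (k+1)) + 1 by omega, pow_succ']
    have h0 := (frobNorm_nonneg (W k)).trans (hW k hk)
    calc _ ≤ frobNorm (W k)ᵀ * vecNorm (backVec L W (k+1)) := vecNorm_mulVec_le _ _
      _ ≤ _ := by
        rw [frobNorm_transpose]
        exact mul_le_mul (hW k hk) ih (vecNorm_nonneg _) h0

/-- First-order expansion of the product of the top layers under a perturbation `Δ` that stays in the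
ball of radius `R`. Besides the Lipschitz bound, it provides the linearization `lin`, through its
pairing with the image of an arbitrary input `g`, and a quadratic bound for the remainder. -/
lemma backVec_perturb {dim : ℕ → ℕ} {L : ℕ} (hdimL : dim L = 1) (W W' Δ : Layers dim) {R : ℝ}
    (hR : 1 ≤ R) (hW : ∀ k < L, frobNorm (W k) ≤ R) (hW' : ∀ k < L, frobNorm (W' k) ≤ R)
    (hΔ : ∀ k < L, W' k = W k + Δ k) (g : Fin (dim 0) → ℝ) (j : ℕ) (hj : j ≤ L) :
    vecNorm (backVec L W' j - backVec L W j) ≤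
        R ^ (L - j - 1) * ∑ k ∈ Finset.Ico j L, frobNorm (Δ k) ∧
    ∃ lin : Fin (dim j) → ℝ,
      lin ⬝ᵥ fwdVec W g j =
        ∑ k ∈ Finset.Ico j L, backVec L W (k+1) ⬝ᵥ (Δ k *ᵥ fwdVec W g k) ∧
      vecNorm (backVec L W' j - backVec L W j - lin) ≤
        R ^ (L - j - 1) * (∑ k ∈ Finset.Ico j L, frobNorm (Δ k)) ^ 2 := by
  induction hj using Nat.decreasingInduction with
  | self =>
    have : backVec L W' L - backVec L W L = 0 := by
      funext i; simp [backVec_top hdimL]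
    simp only [this, Finset.Ico_self, Finset.sum_empty]
    exact ⟨by simp [vecNorm], 0, by simp, by simp [vecNorm]⟩
  | of_succ k hk ih =>
    obtain ⟨ih1, lin, hlin, ih2⟩ := ih
    rw [← Finset.sum_Ioo_add_eq_sum_Ico hk]
    have hIoo : Finset.Ioo k L = Finset.Ico (k+1) L := by ext; simp
    rw [hIoo]
    set s := ∑ k ∈ Finset.Ico (k+1) L, frobNorm (Δ k) with hs
    have hs0 : 0 ≤ s := Finset.sum_nonneg fun _ _ => frobNorm_nonneg _
    have hR0 : 0 ≤ R := by linarith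
    have ha := frobNorm_nonneg (Δ k)
    -- for `k + 1 = L` the exponent truncates, but then the sum is empty
    have hnext : R * (R ^ (L - (k+1) - 1) * s) ≤ R ^ (L - k - 1) * s := by
      rcases Nat.eq_or_lt_of_le (Nat.succ_le_of_lt hk) with h | h
      · have : s = 0 := by rw [hs, show k + 1 = L from h]; simp
        simp [this]
      · rw [show L - k - 1 = (L - (k+1) - 1) + 1 by omega, pow_succ']
        exact le_of_eq (by ring)
    have hpow : R ^ (L - (k+1) - 1) ≤ R ^ (L - k - 1) := pow_le_pow_right₀ hR (by omega)
    have hp0 : 0 ≤ R ^ (L - k - 1) := pow_nonneg hR0 _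
    refine ⟨?_, (W k)ᵀ *ᵥ lin + (Δ k)ᵀ *ᵥ backVec L W (k+1), ?_, ?_⟩
    · have e : backVec L W' k - backVec L W k =
          (W k)ᵀ *ᵥ (backVec L W' (k+1) - backVec L W (k+1)) + (Δ k)ᵀ *ᵥ backVec L W' (k+1) := by
        rw [backVec_lt W' hk, backVec_lt W hk, hΔ k hk, Matrix.transpose_add, Matrix.add_mulVec,
          Matrix.mulVec_sub]
        abel
      rw [e]
      have b1 := vecNorm_mulVec_le (W k)ᵀ (backVec L W' (k+1) - backVec L W (k+1))
      have b2 := vecNorm_mulVec_le (Δ k)ᵀ (backVec L W' (k+1))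
      rw [frobNorm_transpose] at b1 b2
      have b3 : frobNorm (W k) * vecNorm (backVec L W' (k+1) - backVec L W (k+1)) ≤
          R * (R ^ (L - (k+1) - 1) * s) := mul_le_mul (hW k hk) ih1 (vecNorm_nonneg _) hR0
      have b4 : frobNorm (Δ k) * vecNorm (backVec L W' (k+1)) ≤ frobNorm (Δ k) * R ^ (L - k - 1) :=
        mul_le_mul_of_nonneg_left (vecNorm_backVec_le hdimL W' hW' (k+1) hk) ha
      have := vecNorm_add_le ((W k)ᵀ *ᵥ (backVec L W' (k+1) - backVec L W (k+1)))
        ((Δ k)ᵀ *ᵥ backVec L W' (k+1))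
      nlinarith
    · rw [← Finset.sum_Ioo_add_eq_sum_Ico hk, hIoo, ← hlin, fwdVec_succ, add_dotProduct,
        Matrix.mulVec_transpose, Matrix.mulVec_transpose, ← Matrix.dotProduct_mulVec,
        ← Matrix.dotProduct_mulVec]
    · have e : backVec L W' k - backVec L W k -
            ((W k)ᵀ *ᵥ lin + (Δ k)ᵀ *ᵥ backVec L W (k+1)) =
          (W k)ᵀ *ᵥ (backVec L W' (k+1) - backVec L W (k+1) - lin) +
            (Δ k)ᵀ *ᵥ (backVec L W' (k+1) - backVec L W (k+1)) := by
        rw [backVec_lt W' hk, backVec_lt W hk, hΔ k hk, Matrix.transpose_add, Matrix.add_mulVec,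
          Matrix.mulVec_sub, Matrix.mulVec_sub, Matrix.mulVec_sub]
        abel
      rw [e]
      have b1 := vecNorm_mulVec_le (W k)ᵀ (backVec L W' (k+1) - backVec L W (k+1) - lin)
      have b2 := vecNorm_mulVec_le (Δ k)ᵀ (backVec L W' (k+1) - backVec L W (k+1))
      rw [frobNorm_transpose] at b1 b2
      have b3 : frobNorm (W k) * vecNorm (backVec L W' (k+1) - backVec L W (k+1) - lin) ≤
          R * (R ^ (L - (k+1) - 1) * s ^ 2) := mul_le_mul (hW k hk) ih2 (vecNorm_nonneg _) hR0
      have b4 : frobNorm (Δ k) * vecNorm (backVec L W' (k+1) - backVec L W (k+1)) ≤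
          frobNorm (Δ k) * (R ^ (L - k - 1) * s) :=
        mul_le_mul_of_nonneg_left
          (ih1.trans (mul_le_mul_of_nonneg_right hpow hs0)) ha
      have := vecNorm_add_le ((W k)ᵀ *ᵥ (backVec L W' (k+1) - backVec L W (k+1) - lin))
        ((Δ k)ᵀ *ᵥ (backVec L W' (k+1) - backVec L W (k+1)))
      have h5 : R * (R ^ (L - (k+1) - 1) * s ^ 2) ≤ R ^ (L - k - 1) * s ^ 2 := by
        have := mul_le_mul_of_nonneg_right hnext hs0
        linarith
      have h6 : 0 ≤ R ^ (L - k - 1) * (frobNorm (Δ k) * s) := by positivity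
      have h7 : 0 ≤ R ^ (L - k - 1) * frobNorm (Δ k) ^ 2 := by positivity
      nlinarith

/-! ### Loss, linear risk and one-step descent -/

lemma loss_strictAnti {ℓ ℓ' : ℝ → ℝ} (hderiv : ∀ s : ℝ, HasDerivAt ℓ (ℓ' s) s)
    (hneg : ∀ s : ℝ, ℓ' s < 0) : StrictAnti ℓ :=
  strictAnti_of_deriv_neg fun s => by rw [(hderiv s).deriv]; exact hneg s

lemma loss_pos {ℓ ℓ' : ℝ → ℝ} (hderiv : ∀ s : ℝ, HasDerivAt ℓ (ℓ' s) s)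
    (hneg : ∀ s : ℝ, ℓ' s < 0) (htop : Tendsto ℓ atTop (nhds 0)) (s : ℝ) : 0 < ℓ s := by
  have hanti := loss_strictAnti hderiv hneg
  have h1 : 0 ≤ ℓ (s + 1) := hanti.antitone.le_of_tendsto htop (s + 1)
  have h2 : ℓ (s + 1) < ℓ s := hanti (by linarith)
  linarith

/-- Mean value theorem without an order assumption on the endpoints. -/
lemma loss_mvt {ℓ ℓ' : ℝ → ℝ} (hderiv : ∀ s : ℝ, HasDerivAt ℓ (ℓ' s) s) (a b : ℝ) :
    ∃ c, |c - a| ≤ |b - a| ∧ ℓ b - ℓ a = ℓ' c * (b - a) := by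
  have hc : Continuous ℓ := continuous_iff_continuousAt.2 fun s => (hderiv s).continuousAt
  rcases lt_trichotomy a b with h | h | h
  · obtain ⟨c, hc1, hc2⟩ := exists_hasDerivAt_eq_slope ℓ ℓ' h hc.continuousOn fun s _ => hderiv s
    refine ⟨c, ?_, ?_⟩
    · rw [abs_of_pos (by linarith [hc1.1]), abs_of_pos (by linarith)]; linarith [hc1.2]
    · rw [hc2]; field_simp [show b - a ≠ 0 by linarith]
  · exact ⟨a, by simp, by simp [h]⟩
  · obtain ⟨c, hc1, hc2⟩ := exists_hasDerivAt_eq_slope ℓ ℓ' h hc.continuousOn fun s _ => hderiv s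
    refine ⟨c, ?_, ?_⟩
    · rw [abs_of_neg (by linarith [hc1.2]), abs_of_neg (by linarith)]; linarith [hc1.1]
    · have : a - b ≠ 0 := by linarith
      rw [hc2]; field_simp; ring

lemma loss_quad {ℓ ℓ' : ℝ → ℝ} (hderiv : ∀ s : ℝ, HasDerivAt ℓ (ℓ' s) s) {β : ℝ}
    (hβ0 : 0 ≤ β) (hβ : ∀ a b : ℝ, |ℓ' a - ℓ' b| ≤ β * |a - b|) (a b : ℝ) :
    ℓ b ≤ ℓ a + ℓ' a * (b - a) + β * (b - a) ^ 2 := by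
  obtain ⟨c, hc1, hc2⟩ := loss_mvt hderiv a b
  have h1 : (ℓ' c - ℓ' a) * (b - a) ≤ β * (b - a) ^ 2 := by
    calc (ℓ' c - ℓ' a) * (b - a) ≤ |ℓ' c - ℓ' a| * |b - a| := by
          rw [← abs_mul]; exact le_abs_self _
      _ ≤ (β * |b - a|) * |b - a| := by
          refine mul_le_mul_of_nonneg_right ((hβ c a).trans ?_) (abs_nonneg _)
          exact mul_le_mul_of_nonneg_left hc1 hβ0
      _ = β * (b - a) ^ 2 := by rw [mul_assoc, abs_mul_abs_self, sq]
  linarith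

lemma avg_le {n : ℕ} (hn : 0 < n) {f : Fin n → ℝ} {c : ℝ} (h : ∀ i, f i ≤ c) :
    (n : ℝ)⁻¹ * ∑ i, f i ≤ c := by
  have hn' : (0 : ℝ) < n := by exact_mod_cast hn
  rw [inv_mul_le_iff₀ hn']
  calc ∑ i, f i ≤ ∑ _i : Fin n, c := Finset.sum_le_sum fun i _ => h i
    _ = n * c := by simp

lemma le_avg {n : ℕ} (hn : 0 < n) {f : Fin n → ℝ} {c : ℝ} (h : ∀ i, c ≤ f i) :
    c ≤ (n : ℝ)⁻¹ * ∑ i, f i := by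
  have := avg_le hn (f := fun i => - f i) (c := -c) fun i => neg_le_neg (h i)
  simp only [Finset.sum_neg_distrib, mul_neg] at this
  linarith

lemma gradRiskV_dot {n d : ℕ} (ℓ' : ℝ → ℝ) (z : Fin n → Fin d → ℝ) (w v : Fin d → ℝ) :
    gradRiskV ℓ' z w ⬝ᵥ v = (n : ℝ)⁻¹ * ∑ i, ℓ' (w ⬝ᵥ z i) * (v ⬝ᵥ z i) := by
  simp only [gradRiskV, smul_dotProduct, sum_dotProduct, smul_eq_mul]
  simp only [dotProduct_comm v]

lemma vecNorm_gradRiskV_le {n d : ℕ} (hn : 0 < n) {ℓ' : ℝ → ℝ} {z : Fin n → Fin d → ℝ}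
    (hz1 : ∀ i, vecNorm (z i) ≤ 1) {G : ℝ} (hG : ∀ a : ℝ, |ℓ' a| ≤ G) (w : Fin d → ℝ) :
    vecNorm (gradRiskV ℓ' z w) ≤ G := by
  rw [gradRiskV, vecNorm_smul, abs_of_nonneg (by positivity)]
  calc _ ≤ (n : ℝ)⁻¹ * ∑ i, vecNorm (ℓ' (w ⬝ᵥ z i) • z i) :=
        mul_le_mul_of_nonneg_left (vecNorm_sum_le _ _) (by positivity)
    _ ≤ G := avg_le hn fun i => by
        rw [vecNorm_smul]
        have := mul_le_mul (hG (w ⬝ᵥ z i)) (hz1 i) (vecNorm_nonneg _)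
          ((abs_nonneg _).trans (hG 0))
        linarith

lemma riskV_descent {n d : ℕ} (hn : 0 < n) {ℓ ℓ' : ℝ → ℝ} {z : Fin n → Fin d → ℝ}
    (hz1 : ∀ i, vecNorm (z i) ≤ 1)
    (hderiv : ∀ s : ℝ, HasDerivAt ℓ (ℓ' s) s) {β : ℝ} (hβ0 : 0 ≤ β)
    (hβ : ∀ a b : ℝ, |ℓ' a - ℓ' b| ≤ β * |a - b|) (w w' : Fin d → ℝ) :
    riskV ℓ z w' ≤ riskV ℓ z w + gradRiskV ℓ' z w ⬝ᵥ (w' - w) + β * vecNorm (w' - w) ^ 2 := by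
  have h := avg_le hn (f := fun i => ℓ (w' ⬝ᵥ z i) - ℓ (w ⬝ᵥ z i)
    - ℓ' (w ⬝ᵥ z i) * ((w' - w) ⬝ᵥ z i)) (c := β * vecNorm (w' - w) ^ 2) fun i => by
      have h1 := loss_quad hderiv hβ0 hβ (w ⬝ᵥ z i) (w' ⬝ᵥ z i)
      rw [← sub_dotProduct] at h1
      have h2 : ((w' - w) ⬝ᵥ z i) ^ 2 ≤ vecNorm (w' - w) ^ 2 := by
        apply sq_le_sq'
        all_goals
          have h3 := abs_dot_le (w' - w) (z i)
          have h4 := mul_le_mul_of_nonneg_left (hz1 i) (vecNorm_nonneg (w' - w))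
          have h5 := abs_le.1 (h3.trans h4)
          linarith [h5.1, h5.2]
      have := mul_le_mul_of_nonneg_left h2 hβ0
      linarith
  simp only [Finset.sum_sub_distrib, mul_sub] at h
  rw [gradRiskV_dot, riskV, riskV]
  linarith

lemma gradNormSq_nonneg {dim : ℕ → ℕ} (L : ℕ) (ℓ' : ℝ → ℝ) {n : ℕ}
    (z : Fin n → Fin (dim 0) → ℝ) (W : Layers dim) : 0 ≤ gradNormSq L ℓ' z W :=
  Finset.sum_nonneg fun _ _ => sq_nonneg _

lemma frobNorm_grad_sq_le {dim : ℕ → ℕ} (L : ℕ) (ℓ' : ℝ → ℝ) {n : ℕ}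
    (z : Fin n → Fin (dim 0) → ℝ) (W : Layers dim) {k : ℕ} (hk : k < L) :
    frobNorm (gradLayer L ℓ' z W k) ^ 2 ≤ gradNormSq L ℓ' z W :=
  Finset.single_le_sum (f := fun k => frobNorm (gradLayer L ℓ' z W k) ^ 2)
    (fun _ _ => sq_nonneg _) (Finset.mem_range.2 hk)

/-- Sufficient decrease for one gradient step. The step moves each layer by at most one, so the new
weights remain in the ball of radius `R`, and the second-order terms of the product and of the loss
use up at most half of the linear decrease. -/
lemma step_descent {dim : ℕ → ℕ} {L n : ℕ} (hL : 1 ≤ L) (hdimL : dim L = 1) (hn : 0 < n)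
    {ℓ ℓ' : ℝ → ℝ} {z : Fin n → Fin (dim 0) → ℝ} (hz1 : ∀ i, vecNorm (z i) ≤ 1)
    (hderiv : ∀ s : ℝ, HasDerivAt ℓ (ℓ' s) s) {β G : ℝ} (hβ0 : 0 ≤ β)
    (hβ : ∀ a b : ℝ, |ℓ' a - ℓ' b| ≤ β * |a - b|) (hG0 : 0 ≤ G) (hG : ∀ a : ℝ, |ℓ' a| ≤ G)
    (W W' : Layers dim) {η R : ℝ} (hη0 : 0 ≤ η) (hR : 1 ≤ R)
    (hη : η * (2 * (L : ℝ)^2 * R ^ (2*L-2) * (β + G)) ≤ 1)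
    (hW : ∀ k < L, frobNorm (W k) ≤ R - 1)
    (hGD : ∀ k < L, W' k = W k - η • gradLayer L ℓ' z W k) :
    riskW L ℓ z W' ≤ riskW L ℓ z W - η / 2 * gradNormSq L ℓ' z W := by
  set g := gradRiskV ℓ' z (wprod L W) with hg
  have hgG : vecNorm g ≤ G := vecNorm_gradRiskV_le hn hz1 hG _
  have hW1 : ∀ k < L, frobNorm (W k) ≤ R := fun k hk => (hW k hk).trans (by linarith)
  have hL1 : (1 : ℝ) ≤ L := by exact_mod_cast hL
  have hR0 : 0 ≤ R := by linarith
  have hRp : R ^ (L - 1) ≤ R ^ (2*L-2) := pow_le_pow_right₀ hR (by omega)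
  have hRL : 0 ≤ R ^ (L - 1) := pow_nonneg hR0 _
  have hR2 : 0 ≤ R ^ (2*L-2) := pow_nonneg hR0 _
  -- a single step moves each layer by at most one
  have hηG : η * (R ^ (L-1) * G) ≤ 1 := by
    refine le_trans (mul_le_mul_of_nonneg_left ?_ hη0) hη
    have h1 : R ^ (L-1) * G ≤ R ^ (2*L-2) * (β + G) :=
      mul_le_mul hRp (by linarith) hG0 hR2
    have h2 : 1 ≤ 2 * (L : ℝ)^2 := by nlinarith
    have h3 : 0 ≤ R ^ (2*L-2) * (β + G) := mul_nonneg hR2 (by linarith)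
    nlinarith
  have hgrad : ∀ k < L, frobNorm (gradLayer L ℓ' z W k) ≤ R ^ (L-1) * G := fun k hk => by
    rw [gradLayer_eq, frobNorm_vecMulVec]
    calc _ ≤ R ^ (L - (k+1)) * (R ^ k * G) := by
          refine mul_le_mul (vecNorm_backVec_le hdimL W hW1 _ hk) ?_ (vecNorm_nonneg _)
            (pow_nonneg hR0 _)
          exact (vecNorm_fwdVec_le L W _ hW1 k hk.le).trans
            (mul_le_mul_of_nonneg_left hgG (pow_nonneg hR0 _))
      _ = _ := by rw [← mul_assoc, ← pow_add, show L - (k+1) + k = L - 1 by omega]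
  let Δ : Layers dim := fun k => (-η) • gradLayer L ℓ' z W k
  have hΔ : ∀ k, frobNorm (Δ k) = η * frobNorm (gradLayer L ℓ' z W k) := fun k => by
    simp [Δ, frobNorm_smul, -neg_smul, abs_of_nonneg hη0]
  have hW' : ∀ k < L, W' k = W k + Δ k := fun k hk => by
    rw [hGD k hk]; simp [Δ, sub_eq_add_neg]
  have hW'1 : ∀ k < L, frobNorm (W' k) ≤ R := fun k hk => by
    rw [hW' k hk]
    have h1 := frobNorm_add_le (W k) (Δ k)
    have h2 := mul_le_mul_of_nonneg_left (hgrad k hk) hη0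
    rw [← hΔ] at h2
    linarith [hW k hk]
  obtain ⟨h1, lin, hlin, h2⟩ := backVec_perturb hdimL W W' Δ hR hW1 hW'1 hW' g 0 (Nat.zero_le _)
  rw [fwdVec_zero] at hlin
  simp only [Nat.Ico_zero_eq_range, Nat.sub_zero] at h1 h2 hlin
  set S := gradNormSq L ℓ' z W with hS
  have hS0 : 0 ≤ S := gradNormSq_nonneg _ _ _ _
  have hlin' : lin ⬝ᵥ g = -η * S := by
    rw [hlin, hS, gradNormSq, Finset.mul_sum]
    refine Finset.sum_congr rfl fun k _ => ?_
    rw [gradLayer_eq, frobNorm_vecMulVec, mul_pow, vecNorm_sq, vecNorm_sq]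
    simp only [Δ, gradLayer_eq, Matrix.smul_mulVec, Matrix.vecMulVec_mulVec, dotProduct_smul]
    simp [← hg]
  set s := ∑ k ∈ Finset.range L, frobNorm (Δ k) with hs
  have hs0 : 0 ≤ s := Finset.sum_nonneg fun _ _ => frobNorm_nonneg _
  have hs2 : s ^ 2 ≤ L * (η ^ 2 * S) := by
    have := sq_sum_le_card_mul_sum_sq (s := Finset.range L) (f := fun k => frobNorm (Δ k))
    rw [Finset.card_range] at this
    refine this.trans (le_of_eq ?_)
    simp only [hΔ, mul_pow]
    rw [← Finset.mul_sum, hS, gradNormSq]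
  have hd := riskV_descent hn hz1 hderiv hβ0 hβ (wprod L W) (wprod L W')
  rw [← hg, wprod_eq hdimL, wprod_eq hdimL] at hd
  set δ := backVec L W' 0 - backVec L W 0 with hδ
  have hd1 : g ⬝ᵥ δ ≤ -η * S + G * (R ^ (L-1) * s ^ 2) := by
    have e : g ⬝ᵥ δ = lin ⬝ᵥ g + g ⬝ᵥ (δ - lin) := by
      have := dotProduct_sub g δ lin
      rw [dotProduct_comm lin g]
      linarith
    rw [e, hlin']
    have := (le_abs_self _).trans (abs_dot_le g (δ - lin))
    have := mul_le_mul hgG h2 (vecNorm_nonneg _) hG0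
    linarith
  have hd2 : vecNorm δ ^ 2 ≤ R ^ (2*L-2) * s ^ 2 := by
    have := pow_le_pow_left₀ (vecNorm_nonneg _) h1 2
    rwa [mul_pow, ← pow_mul, show (L-1)*2 = 2*L-2 by omega] at this
  have hq : β * vecNorm δ ^ 2 + G * (R ^ (L-1) * s ^ 2) ≤ η / 2 * S := by
    have e1 := mul_le_mul_of_nonneg_left hd2 hβ0
    have e2 : G * (R ^ (L-1) * s ^ 2) ≤ G * (R ^ (2*L-2) * s ^ 2) :=
      mul_le_mul_of_nonneg_left (mul_le_mul_of_nonneg_right hRp (sq_nonneg _)) hG0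
    have e3 : (β + G) * R ^ (2*L-2) * s ^ 2 ≤ (β + G) * R ^ (2*L-2) * (L * (η ^ 2 * S)) :=
      mul_le_mul_of_nonneg_left hs2 (mul_nonneg (by linarith) hR2)
    have e4 : (β + G) * R ^ (2*L-2) * (L * (η ^ 2 * S)) ≤
        (β + G) * R ^ (2*L-2) * (L ^ 2 * (η ^ 2 * S)) := by
      refine mul_le_mul_of_nonneg_left ?_ (mul_nonneg (by linarith) hR2)
      exact mul_le_mul_of_nonneg_right (by nlinarith) (by positivity)
    have e5 := mul_le_mul_of_nonneg_right hη (show 0 ≤ η / 2 * S by positivity)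
    linarith
  rw [riskW, riskW, wprod_eq hdimL, wprod_eq hdimL]
  linarith

/-! ### Imbalance and alignment of the layers -/

/-- The difference `W_{k+1}ᵀ W_{k+1} - W_k W_kᵀ` of the Gram matrices of adjacent layers; gradient flow
conserves it. -/
def imbalance {dim : ℕ → ℕ} (W : Layers dim) (k : ℕ) :
    Matrix (Fin (dim (k+1))) (Fin (dim (k+1))) ℝ :=
  (W (k+1))ᵀ * W (k+1) - W k * (W k)ᵀ

lemma grad_balance {dim : ℕ → ℕ} (L : ℕ) (ℓ' : ℝ → ℝ) {n : ℕ}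
    (z : Fin n → Fin (dim 0) → ℝ) (W : Layers dim) {k : ℕ} (hk : k + 1 < L) :
    (W (k+1))ᵀ * gradLayer L ℓ' z W (k+1) = gradLayer L ℓ' z W k * (W k)ᵀ := by
  rw [gradLayer_eq, gradLayer_eq, Matrix.mul_vecMulVec, Matrix.vecMulVec_mul, ← backVec_lt W hk,
    Matrix.vecMul_transpose, ← fwdVec_succ]

/-- The first-order change of the imbalance cancels, so a step of size at most one perturbs it by at
most `2 η ‖∇R(W)‖²`. -/
lemma imbalance_step {dim : ℕ → ℕ} (L : ℕ) (ℓ' : ℝ → ℝ) {n : ℕ}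
    (z : Fin n → Fin (dim 0) → ℝ) (W W' : Layers dim) {η : ℝ} (hη0 : 0 ≤ η) (hη1 : η ≤ 1)
    (hGD : ∀ k < L, W' k = W k - η • gradLayer L ℓ' z W k) {k : ℕ} (hk : k + 1 < L) :
    frobNorm (imbalance W' k) ≤ frobNorm (imbalance W k) + 2 * (η * gradNormSq L ℓ' z W) := by
  have hb := grad_balance L ℓ' z W hk
  have hbT := congrArg Matrix.transpose hb
  rw [Matrix.transpose_mul, Matrix.transpose_mul, Matrix.transpose_transpose,
    Matrix.transpose_transpose] at hbT
  have h1 := frobNorm_grad_sq_le L ℓ' z W hk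
  have h2 := frobNorm_grad_sq_le L ℓ' z W (show k < L by omega)
  set A := gradLayer L ℓ' z W (k+1)
  set B := gradLayer L ℓ' z W k
  set S := gradNormSq L ℓ' z W
  have e : imbalance W' k = imbalance W k + (η ^ 2) • (Aᵀ * A - B * Bᵀ) := by
    simp only [imbalance]
    rw [hGD (k+1) hk, hGD k (by omega)]
    simp only [Matrix.transpose_sub, Matrix.transpose_smul, Matrix.sub_mul, Matrix.mul_sub,
      Matrix.smul_mul, Matrix.mul_smul, smul_sub, smul_smul, sq]
    rw [hb, hbT]
    abel
  rw [e]
  have h3 := frobNorm_add_le (imbalance W k) ((η ^ 2) • (Aᵀ * A - B * Bᵀ))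
  have h4 := frobNorm_sub_le (Aᵀ * A) (B * Bᵀ)
  have h5 := frobNorm_mul_le Aᵀ A
  have h6 := frobNorm_mul_le B Bᵀ
  rw [frobNorm_transpose] at h5 h6
  rw [frobNorm_smul, abs_of_nonneg (sq_nonneg η)] at h3
  have h7 : frobNorm (Aᵀ * A - B * Bᵀ) ≤ 2 * S := by nlinarith
  have hS : 0 ≤ S := (sq_nonneg _).trans h1
  have h8 : η ^ 2 * frobNorm (Aᵀ * A - B * Bᵀ) ≤ η * (2 * S) :=
    mul_le_mul (by nlinarith) h7 (frobNorm_nonneg _) hη0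
  linarith

/-- The squared Frobenius norm of the top layer, the reference scale for all layers. -/
def topSq {dim : ℕ → ℕ} (L : ℕ) (W : Layers dim) : ℝ := frobNorm (W (L - 1)) ^ 2

lemma frobNorm_diff_of_imbalance {dim : ℕ → ℕ} (W : Layers dim) (k : ℕ) :
    |frobNorm (W (k+1)) ^ 2 - frobNorm (W k) ^ 2| ≤ dim (k+1) * frobNorm (imbalance W k) := by
  have h := abs_trace_le (imbalance W k)
  rw [imbalance, Matrix.trace_sub, ← frobNorm_sq_trace] at h
  have e := frobNorm_sq_trace (W (k+1))ᵀ
  rw [Matrix.transpose_transpose, frobNorm_transpose] at e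
  rw [← e, Fintype.card_fin] at h
  exact h

lemma layer_near_top {dim : ℕ → ℕ} {L : ℕ} (W : Layers dim) {D : ℝ}
    (hD : ∀ k, k + 1 < L → |frobNorm (W (k+1)) ^ 2 - frobNorm (W k) ^ 2| ≤ D)
    (j : ℕ) (hj : j ≤ L - 1) :
    |frobNorm (W j) ^ 2 - topSq L W| ≤ ((L - 1 - j : ℕ) : ℝ) * D := by
  induction hj using Nat.decreasingInduction with
  | self => simp [topSq]
  | of_succ k hk ih =>
    rw [show L - 1 - k = (L - 1 - (k+1)) + 1 by omega]
    push_cast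
    have h1 := abs_le.1 (hD k (by omega))
    have h2 := abs_le.1 ih
    rw [abs_le]
    constructor <;> linarith [h1.1, h1.2, h2.1, h2.2]

lemma backVec_last {dim : ℕ → ℕ} {L : ℕ} (hL : 1 ≤ L) (hdimL : dim L = 1) (W : Layers dim) :
    backVec L W (L-1) ⬝ᵥ backVec L W (L-1) = topSq L W := by
  obtain ⟨N, rfl⟩ : ∃ N, L = N + 1 := ⟨L - 1, by omega⟩
  have : Subsingleton (Fin (dim (N+1))) := by rw [hdimL]; infer_instance
  let a : Fin (dim (N+1)) := ⟨0, by omega⟩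
  rw [topSq, Nat.add_sub_cancel, frobNorm_sq, Fintype.sum_subsingleton _ a,
    backVec_lt W (Nat.lt_succ_self N)]
  simp only [dotProduct, Matrix.mulVec, Matrix.transpose_apply, backVec_top hdimL,
    Fintype.sum_subsingleton _ a, mul_one, sq]

/-- Backpropagation through any layer expands `p` by nearly the factor `‖W_{L-1}‖_F`. In the inductive
step, `‖p_k‖² = ‖W_{k+1} p_{k+1}‖² - ⟨p_{k+1}, E p_{k+1}⟩` with `E` the imbalance, and `p_{k+1} =
W_{k+1}ᵀ p_{k+2}` lets Cauchy-Schwarz transfer the bound from `p_{k+2}`. -/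
lemma backVec_growth {dim : ℕ → ℕ} {L : ℕ} (hL : 1 ≤ L) (hdimL : dim L = 1) (W : Layers dim)
    {D : ℝ} (hD : ∀ k, k + 1 < L → frobNorm (imbalance W k) ≤ D) (j : ℕ) (hj : j ≤ L - 1) :
    (topSq L W - ((L - 1 - j : ℕ) : ℝ) * D) * (backVec L W (j+1) ⬝ᵥ backVec L W (j+1)) ≤
      backVec L W j ⬝ᵥ backVec L W j := by
  induction hj using Nat.decreasingInduction with
  | self =>
    rw [backVec_last hL hdimL, Nat.sub_add_cancel hL, ← vecNorm_sq, vecNorm_backVec_top hdimL]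
    simp
  | of_succ k hk ih =>
    rw [show L - 1 - k = (L - 1 - (k+1)) + 1 by omega]
    push_cast
    set m := topSq L W - ((L - 1 - (k+1) : ℕ) : ℝ) * D with hm
    set p := backVec L W (k+1) with hp
    set q := backVec L W (k+1+1) with hq
    set y := W (k+1) *ᵥ p with hy
    have hkk : k < L := by omega
    have hkk1 : k + 1 < L := by omega
    have e0 : backVec L W k ⬝ᵥ backVec L W k = y ⬝ᵥ y - p ⬝ᵥ (imbalance W k *ᵥ p) := by
      rw [backVec_lt W hkk, ← hp, imbalance, Matrix.sub_mulVec, dotProduct_sub, hy,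
        ← Matrix.mulVec_mulVec, ← Matrix.mulVec_mulVec, Matrix.dotProduct_mulVec p (W (k+1))ᵀ,
        Matrix.vecMul_transpose, Matrix.dotProduct_mulVec p (W k), ← Matrix.mulVec_transpose]
      ring
    have e1 : p ⬝ᵥ p = q ⬝ᵥ y := by
      have hpq : p = q ᵥ* W (k+1) := by rw [hp, backVec_lt W hkk1, Matrix.mulVec_transpose]
      rw [hy, Matrix.dotProduct_mulVec, ← hpq]
    have hpp : 0 ≤ p ⬝ᵥ p := by rw [← vecNorm_sq]; positivity
    have hyy : 0 ≤ y ⬝ᵥ y := by rw [← vecNorm_sq]; positivity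
    have hE : p ⬝ᵥ (imbalance W k *ᵥ p) ≤ D * (p ⬝ᵥ p) := by
      have h1 := (le_abs_self _).trans (abs_dot_le p (imbalance W k *ᵥ p))
      have h2 := mul_le_mul_of_nonneg_left (vecNorm_mulVec_le (imbalance W k) p) (vecNorm_nonneg p)
      have h3 := mul_le_mul_of_nonneg_right (hD k (by omega)) hpp
      rw [← vecNorm_sq] at h3 ⊢
      linarith
    have hmy : m * (p ⬝ᵥ p) ≤ y ⬝ᵥ y := by
      rcases le_or_gt m 0 with h | h
      · exact (mul_nonpos_of_nonpos_of_nonneg h hpp).trans hyy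
      · rcases hpp.eq_or_lt with h0 | h0
        · rw [← h0]; simpa using hyy
        -- `‖p_{k+1}‖⁴ = ⟨q, y⟩² ≤ ‖q‖² ‖y‖²`, and `m ‖q‖² ≤ ‖p_{k+1}‖²` by induction
        · have hcs := dot_sq_le q y
          rw [← e1] at hcs
          have h4 := mul_le_mul_of_nonneg_left hcs h.le
          have h5 := mul_le_mul_of_nonneg_right ih hyy
          refine le_of_mul_le_mul_left ?_ h0
          linarith
    rw [e0]
    linarith

/-- Alignment with defect `C`: all layers have nearly the squared Frobenius norm of the top layer, and
backpropagation expands each `p_{k+1}` nearly as much as that norm allows. -/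
structure Aligned {dim : ℕ → ℕ} (L : ℕ) (W : Layers dim) (C : ℝ) : Prop where
  near : ∀ k < L, |frobNorm (W k) ^ 2 - topSq L W| ≤ C
  growth : ∀ k < L, (topSq L W - C) * vecNorm (backVec L W (k+1)) ^ 2 ≤ vecNorm (backVec L W k) ^ 2

/-- Bounded imbalances give alignment; the widths enter because traces are bounded by Frobenius norms. -/
lemma aligned_of_imbalance {dim : ℕ → ℕ} {L : ℕ} (hL : 1 ≤ L) (hdimL : dim L = 1)
    (W : Layers dim) {D : ℝ} (hD0 : 0 ≤ D)
    (hD : ∀ k, k + 1 < L → frobNorm (imbalance W k) ≤ D) :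
    Aligned L W (L * ((1 + ∑ k ∈ Finset.range L, (dim k : ℝ)) * D)) := by
  set M := ∑ k ∈ Finset.range L, (dim k : ℝ)
  have hM0 : 0 ≤ M := Finset.sum_nonneg fun _ _ => Nat.cast_nonneg _
  have hle : ∀ j, ((L - 1 - j : ℕ) : ℝ) ≤ L := fun j => by exact_mod_cast (by omega)
  constructor
  · intro k hk
    have := layer_near_top W (L := L) (D := (1 + M) * D) (fun k hk => by
      refine (frobNorm_diff_of_imbalance W k).trans ?_
      have : (dim (k+1) : ℝ) ≤ M := Finset.single_le_sum (f := fun k => (dim k : ℝ))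
        (fun _ _ => Nat.cast_nonneg _) (Finset.mem_range.2 hk)
      exact mul_le_mul (by linarith) (hD k hk) (frobNorm_nonneg _) (by linarith)) k (by omega)
    exact this.trans (mul_le_mul_of_nonneg_right (hle k) (by positivity))
  · intro k hk
    have := backVec_growth hL hdimL W hD k (by omega)
    rw [← vecNorm_sq, ← vecNorm_sq] at this
    refine le_trans (mul_le_mul_of_nonneg_right ?_ (sq_nonneg _)) this
    have h1 : ((L - 1 - k : ℕ) : ℝ) * D ≤ L * D := mul_le_mul_of_nonneg_right (hle k) hD0
    have h2 : (L : ℝ) * D ≤ L * ((1 + M) * D) := by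
      refine mul_le_mul_of_nonneg_left ?_ (Nat.cast_nonneg _)
      nlinarith
    linarith

lemma Aligned.backVec_lower {dim : ℕ → ℕ} {L : ℕ} (hdimL : dim L = 1) {W : Layers dim} {C : ℝ}
    (h : Aligned L W C) (hC : C ≤ topSq L W) (j : ℕ) (hj : j ≤ L) :
    (topSq L W - C) ^ (L - j) ≤ vecNorm (backVec L W j) ^ 2 := by
  induction hj using Nat.decreasingInduction with
  | self => simp [vecNorm_backVec_top hdimL]
  | of_succ k hk ih =>
    rw [show L - k = (L - (k+1)) + 1 by omega, pow_succ']
    exact (mul_le_mul_of_nonneg_left ih (by linarith)).trans (h.growth k hk)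

lemma vecNorm_backVec_le_prod {dim : ℕ → ℕ} {L : ℕ} (hdimL : dim L = 1) (W : Layers dim) (j : ℕ)
    (hj : j ≤ L) : vecNorm (backVec L W j) ≤ ∏ k ∈ Finset.Ico j L, frobNorm (W k) := by
  induction hj using Nat.decreasingInduction with
  | self => simp [vecNorm_backVec_top hdimL]
  | of_succ k hk ih =>
    rw [← Finset.prod_Ioo_mul_eq_prod_Ico hk,
      show Finset.Ioo k L = Finset.Ico (k+1) L by ext; simp, backVec_lt W hk]
    refine (vecNorm_mulVec_le _ _).trans ?_
    rw [frobNorm_transpose, mul_comm]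
    exact mul_le_mul_of_nonneg_right ih (frobNorm_nonneg _)

lemma vecNorm_wprod_le_prod {dim : ℕ → ℕ} {L : ℕ} (hdimL : dim L = 1) (W : Layers dim) :
    vecNorm (wprod L W) ≤ ∏ k ∈ Finset.range L, frobNorm (W k) := by
  rw [wprod_eq hdimL]
  simpa using vecNorm_backVec_le_prod hdimL W 0 (Nat.zero_le _)

lemma Aligned.prod_sq_le {dim : ℕ → ℕ} {L : ℕ} {W : Layers dim} {C : ℝ}
    (h : Aligned L W C) :
    (∏ k ∈ Finset.range L, frobNorm (W k)) ^ 2 ≤ (topSq L W + C) ^ L := by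
  rw [← Finset.prod_pow]
  calc _ ≤ ∏ _k ∈ Finset.range L, (topSq L W + C) :=
        Finset.prod_le_prod (fun _ _ => sq_nonneg _) fun k hk => by
          have := (abs_le.1 (h.near k (Finset.mem_range.1 hk))).2
          linarith
    _ = _ := by simp

/-! ### The top singular direction of the first layer -/

lemma vecNorm_mulVec_le_specNorm {m n : Type*} [Fintype m] [Fintype n] (M : Matrix m n ℝ)
    (v : n → ℝ) : vecNorm (M *ᵥ v) ≤ specNorm M * vecNorm v := by
  rcases (vecNorm_nonneg v).eq_or_lt with h | h
  · have := vecNorm_mulVec_le M v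
    rw [← h] at this ⊢
    linarith
  · have hb : BddAbove {c : ℝ | ∃ v : n → ℝ, vecNorm v = 1 ∧ c = vecNorm (M.mulVec v)} := by
      refine ⟨frobNorm M, ?_⟩
      rintro c ⟨v, hv, rfl⟩
      simpa [hv] using vecNorm_mulVec_le M v
    have h1 : vecNorm (M *ᵥ ((vecNorm v)⁻¹ • v)) ≤ specNorm M := by
      refine le_csSup hb ⟨_, ?_, rfl⟩
      rw [vecNorm_smul, abs_of_pos (inv_pos.2 h), inv_mul_cancel₀ h.ne']
    rw [Matrix.mulVec_smul, vecNorm_smul, abs_of_pos (inv_pos.2 h), inv_mul_le_iff₀ h] at h1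
    linarith

lemma transpose_mulVec_sq_le {m n : Type*} [Fintype m] [Fintype n] (M : Matrix m n ℝ)
    (p : m → ℝ) : vecNorm (Mᵀ *ᵥ p) ^ 2 ≤ specNorm M ^ 2 * vecNorm p ^ 2 := by
  set w := Mᵀ *ᵥ p with hw
  have h1 : vecNorm w ^ 2 = p ⬝ᵥ (M *ᵥ w) := by
    rw [vecNorm_sq, Matrix.dotProduct_mulVec p M w, ← Matrix.mulVec_transpose]
  have h2 := (le_abs_self _).trans (abs_dot_le p (M *ᵥ w))
  have h3 := mul_le_mul_of_nonneg_left (vecNorm_mulVec_le_specNorm M w) (vecNorm_nonneg p)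
  have h4 : vecNorm w ^ 2 ≤ vecNorm p * (specNorm M * vecNorm w) := by linarith
  rcases (vecNorm_nonneg w).eq_or_lt with h | h
  · rw [← h, ← mul_pow]; simpa using sq_nonneg (specNorm M * vecNorm p)
  · have h5 : vecNorm w ≤ specNorm M * vecNorm p := by
      refine le_of_mul_le_mul_left ?_ h
      linarith
    rw [← mul_pow]
    exact pow_le_pow_left₀ h.le h5 2

/-- Deflating by the top singular pair leaves `E = M - σ u vᵀ` with `‖E‖_F² = ‖M‖_F² - σ²`, and `Eᵀ p` is
the part of `Mᵀ p` orthogonal to `v`. -/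
lemma top_component {m n : Type*} [Fintype m] [Fintype n] (M : Matrix m n ℝ)
    {u : m → ℝ} {v : n → ℝ} (h : IsTopSingularPair M u v) (p : m → ℝ) :
    vecNorm (Mᵀ *ᵥ p) ^ 2 - (frobNorm M ^ 2 - specNorm M ^ 2) * vecNorm p ^ 2 ≤
      ((Mᵀ *ᵥ p) ⬝ᵥ v) ^ 2 := by
  obtain ⟨hu, hv, hMv, hMu⟩ := h
  set σ := specNorm M
  have hu' : u ⬝ᵥ u = 1 := by rw [← vecNorm_sq, hu]; norm_num
  have hv' : v ⬝ᵥ v = 1 := by rw [← vecNorm_sq, hv]; norm_num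
  let E := M - σ • Matrix.vecMulVec u v
  have hE : frobNorm E ^ 2 = frobNorm M ^ 2 - σ ^ 2 := by
    have e1 : ∑ i, ∑ j, M i j * (u i * v j) = σ := by
      calc ∑ i, ∑ j, M i j * (u i * v j) = u ⬝ᵥ (M *ᵥ v) := by
            simp only [dotProduct, Matrix.mulVec, Finset.mul_sum]
            exact Finset.sum_congr rfl fun i _ => Finset.sum_congr rfl fun j _ => by ring
        _ = σ := by rw [hMv, dotProduct_smul, hu']; simp
    have e2 : ∑ i, ∑ j, (u i * v j) * (u i * v j) = 1 := by
      calc ∑ i, ∑ j, (u i * v j) * (u i * v j) = (u ⬝ᵥ u) * (v ⬝ᵥ v) := by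
            simp only [dotProduct, Finset.sum_mul_sum]
            exact Finset.sum_congr rfl fun i _ => Finset.sum_congr rfl fun j _ => by ring
        _ = 1 := by rw [hu', hv']; norm_num
    rw [frobNorm_sq, frobNorm_sq]
    calc ∑ i, ∑ j, E i j ^ 2 = ∑ i, ∑ j, (M i j ^ 2 - 2 * σ * (M i j * (u i * v j))
            + σ ^ 2 * ((u i * v j) * (u i * v j))) :=
          Finset.sum_congr rfl fun i _ => Finset.sum_congr rfl fun j _ => by
            simp [E, Matrix.vecMulVec_apply]; ring
      _ = ∑ i, ∑ j, M i j ^ 2 - 2 * σ * σ + σ ^ 2 * 1 := by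
          simp only [Finset.sum_add_distrib, Finset.sum_sub_distrib, ← Finset.mul_sum]
          rw [e1, e2]
      _ = _ := by ring
  set w := Mᵀ *ᵥ p with hw
  have hwv : w ⬝ᵥ v = σ * (p ⬝ᵥ u) := by
    rw [hw, Matrix.mulVec_transpose, ← Matrix.dotProduct_mulVec, hMv, dotProduct_smul, smul_eq_mul]
  have hEp : Eᵀ *ᵥ p = w - (w ⬝ᵥ v) • v := by
    simp only [E, Matrix.transpose_sub, Matrix.transpose_smul, Matrix.sub_mulVec,
      Matrix.smul_mulVec, Matrix.transpose_vecMulVec, Matrix.vecMulVec_mulVec]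
    rw [hwv, ← hw, dotProduct_comm u p]
    ext j
    simp
    ring
  have h1 : vecNorm (Eᵀ *ᵥ p) ^ 2 = vecNorm w ^ 2 - (w ⬝ᵥ v) ^ 2 := by
    rw [hEp, vecNorm_sq, vecNorm_sq]
    simp only [sub_dotProduct, dotProduct_sub, smul_dotProduct, dotProduct_smul, smul_eq_mul, hv',
      dotProduct_comm v w]
    ring
  have h2 := pow_le_pow_left₀ (vecNorm_nonneg _) (vecNorm_mulVec_le Eᵀ p) 2
  rw [h1, mul_pow, frobNorm_transpose, hE] at h2
  linarith

/-- Under alignment, `‖W_0‖₂² ≥ a - C` and `‖W_0‖_F² ≤ a + C` with `a = topSq L W`, so by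
`top_component` at most `2C ‖p_1‖²` of `‖w_prod‖²` is lost off the direction `v`. -/
lemma Aligned.component_lower {dim : ℕ → ℕ} {L : ℕ} (hL : 1 ≤ L) (hdimL : dim L = 1)
    {W : Layers dim} {C : ℝ} (hC0 : 0 ≤ C) (h : Aligned L W C) (hC : 3 * C < topSq L W)
    {u : Fin (dim 1) → ℝ} {v : Fin (dim 0) → ℝ} (huv : IsTopSingularPair (W 0) u v) :
    (topSq L W - 3 * C) ^ L ≤ (wprod L W ⬝ᵥ v) ^ 2 := by
  set a := topSq L W
  have hp1 := h.backVec_lower hdimL (by linarith) 1 hL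
  have hpos : 0 < (a - C) ^ (L - 1) := pow_pos (by linarith) _
  have hg : (a - C) * vecNorm (backVec L W 1) ^ 2 ≤ vecNorm (backVec L W 0) ^ 2 := h.growth 0 hL
  have e : backVec L W 0 = (W 0)ᵀ *ᵥ backVec L W 1 := backVec_lt W hL
  have hs := transpose_mulVec_sq_le (W 0) (backVec L W 1)
  have ht := top_component (W 0) huv (backVec L W 1)
  rw [← e] at hs ht
  rw [wprod_eq hdimL]
  set P := vecNorm (backVec L W 1) ^ 2
  have hP : 0 < P := hpos.trans_le hp1
  have hσ : a - C ≤ specNorm (W 0) ^ 2 := le_of_mul_le_mul_right (hg.trans hs) hP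
  have hn := (abs_le.1 (h.near 0 hL)).2
  have h1 : (frobNorm (W 0) ^ 2 - specNorm (W 0) ^ 2) * P ≤ 2 * C * P :=
    mul_le_mul_of_nonneg_right (by linarith) hP.le
  have h2 : (a - 3 * C) * P ≤ (backVec L W 0 ⬝ᵥ v) ^ 2 := by linarith
  refine le_trans ?_ h2
  have h3 : (a - 3 * C) ^ (L - 1) ≤ P :=
    (pow_le_pow_left₀ (by linarith) (by linarith) _).trans hp1
  calc (a - 3 * C) ^ L = (a - 3 * C) * (a - 3 * C) ^ (L - 1) := by
        rw [← pow_succ', Nat.sub_add_cancel hL]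
    _ ≤ _ := mul_le_mul_of_nonneg_left h3 (by linarith)

/-! ### The risk tends to zero -/

/-- On the set where the risk lies in `[ε, R0]`, some margin lies in a fixed compact interval, where
`-ℓ'` is bounded below. Pairing the gradient with the separator `usep` gives the bound, as all
summands have the same sign. -/
lemma gradRiskV_lower {n d : ℕ} (hn : 0 < n) {ℓ ℓ' : ℝ → ℝ} {z : Fin n → Fin d → ℝ}
    {usep : Fin d → ℝ} (husep_unit : vecNorm usep = 1) (husep : ∀ i, 0 < usep ⬝ᵥ z i)
    (hpos : ∀ s, 0 < ℓ s) (hcont : Continuous ℓ') (hneg : ∀ s : ℝ, ℓ' s < 0)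
    (hbot : Tendsto ℓ atBot atTop) (htop : Tendsto ℓ atTop (nhds 0))
    {ε : ℝ} (hε : 0 < ε) (R0 : ℝ) :
    ∃ δ > 0, ∀ w, ε ≤ riskV ℓ z w → riskV ℓ z w ≤ R0 → δ ≤ vecNorm (gradRiskV ℓ' z w) := by
  have : Nonempty (Fin n) := ⟨⟨0, hn⟩⟩
  have hn' : (0 : ℝ) < n := by exact_mod_cast hn
  obtain ⟨i0, hi0⟩ := Finite.exists_min fun i => usep ⬝ᵥ z i
  obtain ⟨M1, hM1⟩ := ((htop.eventually (gt_mem_nhds hε))).exists_forall_of_atTop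
  obtain ⟨M2, hM2⟩ := ((hbot.eventually (eventually_gt_atTop (n * R0)))).exists_forall_of_atBot
  obtain ⟨δ0, hδ0, hδ⟩ : ∃ δ0 > 0, ∀ s ∈ Set.Icc M2 M1, δ0 ≤ -ℓ' s := by
    rcases (Set.Icc M2 M1).eq_empty_or_nonempty with h | h
    · exact ⟨1, one_pos, by simp [h]⟩
    · obtain ⟨s0, _, hs0⟩ := isCompact_Icc.exists_isMinOn h hcont.neg.continuousOn
      exact ⟨-ℓ' s0, by linarith [hneg s0], fun s hs => hs0 hs⟩
  refine ⟨(n : ℝ)⁻¹ * (δ0 * (usep ⬝ᵥ z i0)), by have := husep i0; positivity, fun w h1 h2 => ?_⟩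
  obtain ⟨i, hi⟩ : ∃ i, ε ≤ ℓ (w ⬝ᵥ z i) := by
    by_contra! hcon
    have : (n : ℝ)⁻¹ * ∑ i, ℓ (w ⬝ᵥ z i) < ε := by
      rw [inv_mul_lt_iff₀ hn']
      calc ∑ i, ℓ (w ⬝ᵥ z i) < ∑ _i : Fin n, ε :=
            Finset.sum_lt_sum_of_nonempty Finset.univ_nonempty fun i _ => hcon i
        _ = n * ε := by simp
    exact absurd h1 (not_le.2 this)
  have hi2 : ℓ (w ⬝ᵥ z i) ≤ n * R0 := by
    rw [riskV, inv_mul_le_iff₀ hn'] at h2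
    exact (Finset.single_le_sum (f := fun i => ℓ (w ⬝ᵥ z i)) (fun i _ => (hpos _).le)
      (Finset.mem_univ i)).trans h2
  have hmem : w ⬝ᵥ z i ∈ Set.Icc M2 M1 := by
    constructor
    · by_contra! h
      exact absurd (hM2 _ h.le) (not_lt.2 hi2)
    · by_contra! h
      exact absurd (hM1 _ h.le) (not_lt.2 hi)
  have h3 := abs_dot_le (gradRiskV ℓ' z w) usep
  rw [husep_unit, mul_one] at h3
  refine le_trans ?_ ((neg_le_abs _).trans h3)
  rw [gradRiskV_dot, ← mul_neg, ← Finset.sum_neg_distrib]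
  refine mul_le_mul_of_nonneg_left ?_ (by positivity)
  have h4 : ∀ i, 0 ≤ -(ℓ' (w ⬝ᵥ z i) * (usep ⬝ᵥ z i)) := fun i => by
    have := mul_pos (neg_pos.2 (hneg (w ⬝ᵥ z i))) (husep i)
    linarith
  refine le_trans ?_ (Finset.single_le_sum (fun i _ => h4 i) (Finset.mem_univ i))
  have := mul_le_mul (hδ _ hmem) (hi0 i) (husep i0).le (by linarith [hneg (w ⬝ᵥ z i)])
  linarith

lemma vecNorm_large_of_risk_small {n d : ℕ} (hn : 0 < n) {ℓ : ℝ → ℝ} {z : Fin n → Fin d → ℝ}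
    (hz1 : ∀ i, vecNorm (z i) ≤ 1) (hpos : ∀ s, 0 < ℓ s) (hanti : StrictAnti ℓ) (M : ℝ) :
    ∃ ε > 0, ∀ w, riskV ℓ z w < ε → M < vecNorm w := by
  have hn' : (0 : ℝ) < n := by exact_mod_cast hn
  refine ⟨(n : ℝ)⁻¹ * ℓ M, by have := hpos M; positivity, fun w hw => ?_⟩
  have h1 : ∑ i, ℓ (w ⬝ᵥ z i) < ℓ M := lt_of_mul_lt_mul_left hw (by positivity)
  have h2 : ℓ (w ⬝ᵥ z ⟨0, hn⟩) < ℓ M :=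
    (Finset.single_le_sum (f := fun i => ℓ (w ⬝ᵥ z i)) (fun i _ => (hpos _).le)
      (Finset.mem_univ (⟨0, hn⟩ : Fin n))).trans_lt h1
  have h3 := hanti.lt_iff_gt.1 h2
  have h4 := (le_abs_self _).trans (abs_dot_le w (z ⟨0, hn⟩))
  have h5 := mul_le_mul_of_nonneg_left (hz1 ⟨0, hn⟩) (vecNorm_nonneg w)
  linarith

/-- A risk well below `ℓ 0` forces the predictor away from the origin. -/
lemma riskV_ge_near_zero {n d : ℕ} (hn : 0 < n) {ℓ ℓ' : ℝ → ℝ} {z : Fin n → Fin d → ℝ}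
    (hz1 : ∀ i, vecNorm (z i) ≤ 1) (hderiv : ∀ s : ℝ, HasDerivAt ℓ (ℓ' s) s)
    {G : ℝ} (hG : ∀ a : ℝ, |ℓ' a| ≤ G) (w : Fin d → ℝ) :
    ℓ 0 - G * vecNorm w ≤ riskV ℓ z w := by
  refine le_avg hn fun i => ?_
  obtain ⟨c, -, hc⟩ := loss_mvt hderiv 0 (w ⬝ᵥ z i)
  have h4 := abs_dot_le w (z i)
  have h5 := mul_le_mul_of_nonneg_left (hz1 i) (vecNorm_nonneg w)
  have h6 : |ℓ' c * (w ⬝ᵥ z i - 0)| ≤ G * vecNorm w := by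
    rw [abs_mul, sub_zero]
    exact mul_le_mul (hG c) (by linarith) (abs_nonneg _) ((abs_nonneg _).trans (hG 0))
  have := neg_abs_le (ℓ' c * (w ⬝ᵥ z i - 0))
  linarith

/-- For large layers `p_1` is bounded below by alignment; for bounded layers it is bounded below
because `w_prod = W_0ᵀ p_1` is. -/
lemma Aligned.backVec_one_lower {dim : ℕ → ℕ} {L : ℕ} (hL : 1 ≤ L) (hdimL : dim L = 1)
    {W : Layers dim} {C c : ℝ} (hC0 : 0 ≤ C) (h : Aligned L W C) (hc : 0 ≤ c)
    (hw : c ≤ vecNorm (wprod L W)) :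
    min 1 (c ^ 2 / (2 * C + 1)) ≤ vecNorm (backVec L W 1) ^ 2 := by
  rcases le_total (C + 1) (topSq L W) with h1 | h1
  · refine (min_le_left _ _).trans (le_trans ?_ (h.backVec_lower hdimL (by linarith) 1 hL))
    exact one_le_pow₀ (by linarith)
  · refine (min_le_right _ _).trans ?_
    rw [div_le_iff₀ (by linarith)]
    have e : wprod L W = (W 0)ᵀ *ᵥ backVec L W 1 := by
      rw [wprod_eq hdimL]; exact backVec_lt W hL
    have h2 := vecNorm_mulVec_le (W 0)ᵀ (backVec L W 1)
    rw [← e, frobNorm_transpose] at h2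
    have h3 := pow_le_pow_left₀ hc (hw.trans h2) 2
    have h4 := (abs_le.1 (h.near 0 hL)).2
    have h5 : frobNorm (W 0) ^ 2 * vecNorm (backVec L W 1) ^ 2 ≤
        (2 * C + 1) * vecNorm (backVec L W 1) ^ 2 :=
      mul_le_mul_of_nonneg_right (by linarith) (sq_nonneg _)
    rw [mul_pow] at h3
    linarith

/-- If the weights stay in the ball of radius `B`, the radius sequence freezes as soon as it exceeds
`B + 1`. -/
lemma radius_bounded {Rseq : ℕ → ℝ} {dim : ℕ → ℕ} {L : ℕ} {W : ℕ → Layers dim}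
    (hRmono : ∀ t, (∀ k < L, frobNorm (W (t+1) k) ≤ Rseq t - 1) → Rseq (t+1) = Rseq t)
    {B : ℝ} (hB : ∀ t, ∀ k < L, frobNorm (W t k) ≤ B) : ∃ B', ∀ t, Rseq t ≤ B' := by
  by_cases h : ∃ T, B + 1 < Rseq T
  · obtain ⟨T, hT⟩ := h
    have hconst : ∀ s, Rseq (T + s) = Rseq T := by
      intro s
      induction s with
      | zero => rfl
      | succ s ih =>
        rw [← add_assoc, hRmono (T + s) fun k hk => ?_, ih]
        rw [ih]
        linarith [hB (T + s + 1) k hk]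
    refine ⟨∑ t ∈ Finset.range (T + 1), |Rseq t|, fun t => ?_⟩
    have hle : ∀ s ≤ T, Rseq s ≤ ∑ t ∈ Finset.range (T + 1), |Rseq t| := fun s hs =>
      (le_abs_self _).trans (Finset.single_le_sum (f := fun t => |Rseq t|)
        (fun _ _ => abs_nonneg _) (Finset.mem_range.2 (by omega)))
    rcases le_total t T with h1 | h1
    · exact hle t h1
    · obtain ⟨s, rfl⟩ := Nat.exists_eq_add_of_le h1
      rw [hconst]
      exact hle T le_rfl
  · push Not at h
    exact ⟨B + 1, h⟩

/-- The squared gradient norm `S` cannot stay above `κ > 0` while `∑ η_t S_t` is finite. Here `grad` and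
`S` are abstract; only `‖grad_k‖² ≤ S` is used. -/
lemma no_stall {dim : ℕ → ℕ} {L : ℕ} {W : ℕ → Layers dim} {η Rseq S : ℕ → ℝ}
    {grad : ∀ _ : ℕ, Layers dim} {K κ A : ℝ} (hK : 0 < K) (hκ : 0 < κ)
    (hη : ∀ t, η t = min (K * (Rseq t)^(2*L-2))⁻¹ 1)
    (hR1 : ∀ t, 1 ≤ Rseq t)
    (hRmono : ∀ t, (∀ k < L, frobNorm (W (t+1) k) ≤ Rseq t - 1) → Rseq (t+1) = Rseq t)
    (hGD : ∀ t : ℕ, ∀ k < L, W (t+1) k = W t k - η t • grad t k)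
    (hgS : ∀ t, ∀ k < L, frobNorm (grad t k) ^ 2 ≤ S t)
    (hsum : ∀ T, ∑ t ∈ Finset.range T, η t * S t ≤ A) (hS : ∀ t, κ ≤ S t) : False := by
  have hB0 : ∀ t, 0 < K * (Rseq t)^(2*L-2) := fun t =>
    mul_pos hK (pow_pos (by linarith [hR1 t]) _)
  have hη0 : ∀ t, 0 < η t := fun t => by
    rw [hη]; exact lt_min (inv_pos.2 (hB0 t)) one_pos
  -- finite total decrease with `κ ≤ S` forces finite path length
  have hstep : ∀ t, ∀ k < L, frobNorm (W (t+1) k) ≤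
      frobNorm (W t k) + (κ⁻¹ + 1) * (η t * S t) := fun t k hk => by
    rw [hGD t k hk]
    have h1 := frobNorm_sub_le (W t k) (η t • grad t k)
    rw [frobNorm_smul, abs_of_pos (hη0 t)] at h1
    have h2 := hgS t k hk
    have h3 : 1 ≤ κ⁻¹ * S t := by
      rw [← inv_mul_cancel₀ hκ.ne']
      exact mul_le_mul_of_nonneg_left (hS t) (inv_pos.2 hκ).le
    have h4 : frobNorm (grad t k) ≤ (κ⁻¹ + 1) * S t := by
      nlinarith [sq_nonneg (frobNorm (grad t k) - 1), frobNorm_nonneg (grad t k)]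
    have h5 := mul_le_mul_of_nonneg_left h4 (hη0 t).le
    linarith
  have hbd : ∀ T, ∀ k < L, frobNorm (W T k) ≤
      frobNorm (W 0 k) + (κ⁻¹ + 1) * ∑ t ∈ Finset.range T, η t * S t := by
    intro T k hk
    induction T with
    | zero => simp
    | succ T ih =>
      rw [Finset.sum_range_succ, mul_add]
      linarith [hstep T k hk]
  have hκ1 : 0 < κ⁻¹ + 1 := by positivity
  obtain ⟨B', hB'⟩ := radius_bounded hRmono
    (B := ∑ k ∈ Finset.range L, frobNorm (W 0 k) + (κ⁻¹ + 1) * A) fun t k hk => by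
      have h1 := hbd t k hk
      have h2 := mul_le_mul_of_nonneg_left (hsum t) hκ1.le
      have h3 := Finset.single_le_sum (f := fun k => frobNorm (W 0 k))
        (fun _ _ => frobNorm_nonneg _) (Finset.mem_range.2 hk)
      linarith
  have hB'1 : 1 ≤ B' := (hR1 0).trans (hB' 0)
  set m := min (K * B' ^ (2*L-2))⁻¹ 1
  have hm : 0 < m := lt_min (inv_pos.2 (mul_pos hK (pow_pos (by linarith) _))) one_pos
  have hmη : ∀ t, m ≤ η t := fun t => by
    rw [hη]
    refine min_le_min ?_ le_rfl
    refine inv_anti₀ (hB0 t) (mul_le_mul_of_nonneg_left ?_ hK.le)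
    exact pow_le_pow_left₀ (by linarith [hR1 t]) (hB' t) _
  obtain ⟨T, hT⟩ := exists_nat_gt (A / (m * κ))
  rw [div_lt_iff₀ (by positivity)] at hT
  have h1 : ∑ _t ∈ Finset.range T, m * κ ≤ ∑ t ∈ Finset.range T, η t * S t :=
    Finset.sum_le_sum fun t _ => mul_le_mul (hmη t) (hS t) hκ.le (hη0 t).le
  simp only [Finset.sum_const, Finset.card_range, nsmul_eq_mul] at h1
  linarith [hsum T]

/-! ### Convergence of gradient descent -/

theorem stmt17
    (dim : ℕ → ℕ) (L n : ℕ) (hL : 1 ≤ L) (hdimL : dim L = 1) (hn : 0 < n)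
    (x : Fin n → Fin (dim 0) → ℝ) (y : Fin n → ℝ) (z : Fin n → Fin (dim 0) → ℝ)
    (hx : ∀ i, vecNorm (x i) ≤ 1) (hy : ∀ i, y i = 1 ∨ y i = -1)
    (hz : ∀ i, z i = y i • x i)
    (usep : Fin (dim 0) → ℝ) (husep_unit : vecNorm usep = 1)
    (husep : ∀ i, 0 < usep ⬝ᵥ z i)
    (ℓ ℓ' : ℝ → ℝ) (hderiv : ∀ s : ℝ, HasDerivAt ℓ (ℓ' s) s) (hcont : Continuous ℓ')
    (hneg : ∀ s : ℝ, ℓ' s < 0)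
    (hbot : Tendsto ℓ atBot atTop) (htop : Tendsto ℓ atTop (nhds 0))
    (β G : ℝ) (hβ : ∀ a b : ℝ, |ℓ' a - ℓ' b| ≤ β * |a - b|) (hG : ∀ a : ℝ, |ℓ' a| ≤ G)
    (W : ℕ → Layers dim) (η : ℕ → ℝ) (Rseq : ℕ → ℝ)
    (hGD : ∀ t : ℕ, ∀ k < L, W (t+1) k = W t k - η t • gradLayer L ℓ' z (W t) k)
    (hη : ∀ t, η t = min (2 * (L : ℝ)^2 * (Rseq t)^(2*L-2) * (β + G))⁻¹ 1)
    (hR1 : ∀ t, 1 ≤ Rseq t)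
    (hRt : ∀ t, ∀ k < L, frobNorm (W t k) ≤ Rseq t - 1)
    (hRmono : ∀ t, (∀ k < L, frobNorm (W (t+1) k) ≤ Rseq t - 1) → Rseq (t+1) = Rseq t)
    (hinit_grad : ∃ k < L, gradLayer L ℓ' z (W 0) k ≠ 0)
    (hinit_risk : riskW L ℓ z (W 0) ≤ ℓ 0)
    :
    Tendsto (fun t : ℕ => riskW L ℓ z (W t)) atTop (nhds 0)
    ∧ (∀ k < L, Tendsto (fun t : ℕ => frobNorm (W t k)) atTop atTop)
    ∧ (∀ (u1 : ℕ → Fin (dim 1) → ℝ) (v1 : ℕ → Fin (dim 0) → ℝ),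
        (∀ t : ℕ, IsTopSingularPair (W t 0) (u1 t) (v1 t)) →
        Tendsto (fun t : ℕ =>
            |wprod L (W t) ⬝ᵥ v1 t / ∏ k ∈ Finset.range L, frobNorm (W t k)|)
          atTop (nhds 1)) := by
  have hz1 : ∀ i, vecNorm (z i) ≤ 1 := fun i => by
    rw [hz, vecNorm_smul]
    rcases hy i with h | h <;> simpa [h] using hx i
  have hanti := loss_strictAnti hderiv hneg
  have hpos := loss_pos hderiv hneg htop
  have hG0 : 0 < G := (abs_pos.2 (hneg 0).ne).trans_le (hG 0)
  have hβ0 : 0 ≤ β := by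
    have := (abs_nonneg _).trans (hβ 1 0)
    simpa using this
  have hL0 : (0 : ℝ) < L := by exact_mod_cast hL
  have hK : 0 < 2 * (L : ℝ)^2 * (β + G) := by positivity
  have hB : ∀ t, 0 < 2 * (L : ℝ)^2 * (Rseq t)^(2*L-2) * (β + G) := fun t => by
    have : 0 < Rseq t := by linarith [hR1 t]
    positivity
  have hη0 : ∀ t, 0 < η t := fun t => by
    rw [hη]; exact lt_min (inv_pos.2 (hB t)) one_pos
  have hη1 : ∀ t, η t ≤ 1 := fun t => by rw [hη]; exact min_le_right _ _
  have hηB : ∀ t, η t * (2 * (L : ℝ)^2 * (Rseq t)^(2*L-2) * (β + G)) ≤ 1 := fun t => by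
    have h1 : η t ≤ (2 * (L : ℝ)^2 * (Rseq t)^(2*L-2) * (β + G))⁻¹ := by
      rw [hη]; exact min_le_left _ _
    calc _ ≤ _ := mul_le_mul_of_nonneg_right h1 (hB t).le
      _ = 1 := inv_mul_cancel₀ (hB t).ne'
  set S : ℕ → ℝ := fun t => gradNormSq L ℓ' z (W t) with hSdef
  have hS0 : ∀ t, 0 ≤ S t := fun t => gradNormSq_nonneg _ _ _ _
  set r : ℕ → ℝ := fun t => riskW L ℓ z (W t) with hr
  have hrpos : ∀ t, 0 ≤ r t := fun t => le_avg hn fun i => (hpos _).le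
  have hdesc : ∀ t, r (t+1) ≤ r t - η t / 2 * S t := fun t =>
    step_descent hL hdimL hn hz1 hderiv hβ0 hβ hG0.le hG (W t) (W (t+1)) (hη0 t).le (hR1 t)
      (hηB t) (hRt t) (hGD t)
  have hηS : ∀ t, 0 ≤ η t * S t := fun t => mul_nonneg (hη0 t).le (hS0 t)
  have hranti : Antitone r := antitone_nat_of_succ_le fun t => by
    linarith [hdesc t, hηS t]
  have hsum' : ∀ T, ∑ t ∈ Finset.range T, η t * S t ≤ 2 * (r 0 - r T) := by
    intro T
    induction T with
    | zero => simp
    | succ T ih => rw [Finset.sum_range_succ]; linarith [hdesc T]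
  have hsum : ∀ T, ∑ t ∈ Finset.range T, η t * S t ≤ 2 * r 0 := fun T => by
    linarith [hsum' T, hrpos T]
  -- a bound on all imbalances, valid at all times
  set D := ∑ k ∈ Finset.range L, frobNorm (imbalance (W 0) k) + 2 * (2 * r 0) with hD
  have himb : ∀ T k, k + 1 < L → frobNorm (imbalance (W T) k) ≤
      frobNorm (imbalance (W 0) k) + 2 * ∑ t ∈ Finset.range T, η t * S t := by
    intro T k hk
    induction T with
    | zero => simp
    | succ T ih =>
      rw [Finset.sum_range_succ]
      have := imbalance_step L ℓ' z (W T) (W (T+1)) (hη0 T).le (hη1 T) (hGD T) hk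
      linarith
  have hD0 : 0 ≤ D := add_nonneg (Finset.sum_nonneg fun _ _ => frobNorm_nonneg _)
    (by linarith [hrpos 0])
  obtain ⟨C, hC0, hal⟩ : ∃ C, 0 ≤ C ∧ ∀ t, Aligned L (W t) C := by
    refine ⟨_, ?_, fun t => aligned_of_imbalance hL hdimL (W t) hD0 fun k hk => ?_⟩
    · have : 0 ≤ ∑ k ∈ Finset.range L, (dim k : ℝ) :=
        Finset.sum_nonneg fun _ _ => Nat.cast_nonneg _
      positivity
    · have h1 := himb t k hk
      have h2 := hsum t
      have h3 := Finset.single_le_sum (f := fun k => frobNorm (imbalance (W 0) k))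
        (fun _ _ => frobNorm_nonneg _) (Finset.mem_range.2 (show k < L by omega))
      linarith
  -- the first step strictly decreases the risk, which keeps the predictor away from the origin
  have hS00 : 0 < S 0 := by
    obtain ⟨k, hk, hne⟩ := hinit_grad
    refine lt_of_lt_of_le ?_ (frobNorm_grad_sq_le L ℓ' z (W 0) hk)
    refine pow_pos (lt_of_le_of_ne (frobNorm_nonneg _) fun h => hne ?_) 2
    have h2 := frobNorm_sq (gradLayer L ℓ' z (W 0) k)
    rw [← h] at h2
    ext i j
    have h3 : gradLayer L ℓ' z (W 0) k i j ^ 2 ≤ 0 := by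
      calc _ ≤ ∑ j, gradLayer L ℓ' z (W 0) k i j ^ 2 :=
            Finset.single_le_sum (f := fun j => gradLayer L ℓ' z (W 0) k i j ^ 2)
              (fun _ _ => sq_nonneg _) (Finset.mem_univ j)
        _ ≤ ∑ i, ∑ j, gradLayer L ℓ' z (W 0) k i j ^ 2 :=
            Finset.single_le_sum (f := fun i => ∑ j, gradLayer L ℓ' z (W 0) k i j ^ 2)
              (fun _ _ => Finset.sum_nonneg fun _ _ => sq_nonneg _) (Finset.mem_univ i)
        _ = 0 := by rw [← h2]; norm_num
    simpa using pow_eq_zero_iff (two_ne_zero) |>.1 (le_antisymm h3 (sq_nonneg _))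
  have hwlow : ∀ t, 1 ≤ t → η 0 / 2 * S 0 / G ≤ vecNorm (wprod L (W t)) := fun t ht => by
    rw [div_le_iff₀ hG0]
    have h1 := riskV_ge_near_zero hn hz1 hderiv hG (wprod L (W t))
    have h2 : riskV ℓ z (wprod L (W t)) ≤ r 1 := hranti ht
    have h3 := hdesc 0
    have h4 : r 0 ≤ ℓ 0 := hinit_risk
    simp only [Nat.zero_add] at h3
    linarith
  have hc0 : 0 < η 0 / 2 * S 0 / G := by have := hη0 0; positivity
  -- at time zero the gradient is nonzero; later, `‖∇_0‖ = ‖p_1‖ ‖∇R(w_prod)‖` is bounded below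
  have hinf : ∀ ε > 0, ∃ N, r N < ε := by
    intro ε hε
    by_contra! hcon
    obtain ⟨δ, hδ0, hδ⟩ := gradRiskV_lower hn husep_unit husep hpos hcont hneg hbot htop hε (r 0)
    set κ1 := min 1 ((η 0 / 2 * S 0 / G) ^ 2 / (2 * C + 1))
    have hκ1 : 0 < κ1 := lt_min one_pos (by positivity)
    refine no_stall (L := L) (W := W) (η := η) (Rseq := Rseq) (S := S)
      (grad := fun t k => gradLayer L ℓ' z (W t) k) (κ := min (S 0) (κ1 * δ ^ 2)) (A := 2 * r 0)
      hK (lt_min hS00 (by positivity)) (fun t => ?_) hR1 hRmono hGD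
      (fun t k hk => frobNorm_grad_sq_le L ℓ' z (W t) hk) hsum (fun t => ?_)
    · rw [hη]; congr 2; ring
    · rcases Nat.eq_zero_or_pos t with rfl | ht
      · exact min_le_left _ _
      · refine (min_le_right _ _).trans (le_trans ?_ (frobNorm_grad_sq_le L ℓ' z (W t) hL))
        rw [gradLayer_eq, frobNorm_vecMulVec, fwdVec_zero, mul_pow]
        refine mul_le_mul ((hal t).backVec_one_lower hL hdimL hC0 hc0.le (hwlow t ht)) ?_
          (sq_nonneg _) (sq_nonneg _)
        exact pow_le_pow_left₀ hδ0.le (hδ _ (hcon t) (hranti (Nat.zero_le t))) 2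
  have hrlim : Tendsto r atTop (nhds 0) := by
    rw [Metric.tendsto_atTop]
    intro ε hε
    obtain ⟨N, hN⟩ := hinf ε hε
    refine ⟨N, fun t ht => ?_⟩
    rw [Real.dist_0_eq_abs, abs_of_nonneg (hrpos t)]
    exact (hranti ht).trans_lt hN
  have htopinf : Tendsto (fun t => topSq L (W t)) atTop atTop := by
    rw [tendsto_atTop]
    intro B
    obtain ⟨ε, hε, hM⟩ := vecNorm_large_of_risk_small hn hz1 hpos hanti
      (Real.sqrt ((max B 0 + C) ^ L))
    filter_upwards [hrlim.eventually (gt_mem_nhds hε)] with t ht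
    by_contra! hlt
    have h1 := hM _ ht
    have h2 := h1.trans_le (vecNorm_wprod_le_prod hdimL (W t))
    have h3 := pow_lt_pow_left₀ h2 (Real.sqrt_nonneg _) two_ne_zero
    rw [Real.sq_sqrt (by positivity)] at h3
    have h4 := h3.trans_le (hal t).prod_sq_le
    have h5 : (topSq L (W t) + C) ^ L ≤ (max B 0 + C) ^ L := by
      refine pow_le_pow_left₀ (add_nonneg (sq_nonneg _) hC0) ?_ L
      linarith [le_max_left B 0]
    linarith
  refine ⟨hrlim, fun k hk => ?_, fun u1 v1 huv => ?_⟩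
  · rw [tendsto_atTop]
    intro B
    filter_upwards [htopinf.eventually_ge_atTop (B ^ 2 + C)] with t ht
    have h1 := (abs_le.1 ((hal t).near k hk)).1
    exact le_of_sq_le_sq (by linarith) (frobNorm_nonneg _)
  · set a := fun t => topSq L (W t)
    have hlow : Tendsto (fun t => ((a t - 3 * C) / (a t + C)) ^ L) atTop (nhds 1) := by
      have h1 : Tendsto (fun t => 1 - 4 * C / (a t + C)) atTop (nhds (1 - 0)) :=
        tendsto_const_nhds.sub
          (tendsto_const_nhds.div_atTop (tendsto_atTop_add_const_right _ C htopinf))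
      have h2 := (h1.pow L)
      rw [sub_zero, one_pow] at h2
      refine h2.congr' ?_
      filter_upwards [htopinf.eventually_gt_atTop 0] with t ht
      have : a t + C ≠ 0 := by have : 0 < a t := ht; positivity
      congr 1
      field_simp
      ring
    have habs : ∀ t, |wprod L (W t) ⬝ᵥ v1 t| ≤ ∏ k ∈ Finset.range L, frobNorm (W t k) := fun t => by
      refine ((abs_dot_le _ _).trans ?_).trans (vecNorm_wprod_le_prod hdimL (W t))
      rw [(huv t).2.1, mul_one]
    have hratio : ∀ t, |wprod L (W t) ⬝ᵥ v1 t / ∏ k ∈ Finset.range L, frobNorm (W t k)| ≤ 1 :=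
      fun t => by
        rw [abs_div]
        exact div_le_one_of_le₀ ((habs t).trans (le_abs_self _)) (abs_nonneg _)
    refine tendsto_of_tendsto_of_tendsto_of_le_of_le' hlow tendsto_const_nhds ?_
      (Eventually.of_forall hratio)
    filter_upwards [htopinf.eventually_gt_atTop (3 * C)] with t ht
    have h1 : (a t - 3 * C) ^ L ≤ (wprod L (W t) ⬝ᵥ v1 t) ^ 2 :=
      (hal t).component_lower hL hdimL hC0 ht (huv t)
    have h2 : (∏ k ∈ Finset.range L, frobNorm (W t k)) ^ 2 ≤ (a t + C) ^ L := (hal t).prod_sq_le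
    have h3 : 0 < (a t - 3 * C) ^ L := pow_pos (sub_pos.2 ht) L
    have hP : 0 < ∏ k ∈ Finset.range L, frobNorm (W t k) :=
      (abs_pos.2 fun h => by rw [h] at h1; norm_num at h1; linarith).trans_le (habs t)
    -- the ratio is at most one, hence at least its square
    have h4 : (wprod L (W t) ⬝ᵥ v1 t / ∏ k ∈ Finset.range L, frobNorm (W t k)) ^ 2 ≤
        |wprod L (W t) ⬝ᵥ v1 t / ∏ k ∈ Finset.range L, frobNorm (W t k)| := by
      rw [← sq_abs, sq]
      exact mul_le_of_le_one_left (abs_nonneg _) (hratio t)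
    refine le_trans ?_ h4
    rw [div_pow, div_pow]
    exact div_le_div₀ (sq_nonneg _) h1 (pow_pos hP 2) h2

end
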